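/- Let L be a ℤ-graded Lie conformal algebra of class 𝒱 with deg p_{0,1}(λ) = 2. Then L is isomorphic, as a Lie conformal algebra, to SCL₂(0,s) for some s ∈ ℂ. -/

import Mathlib

open scoped BigOperators Classical ENNReal
open Polynomial

noncomputable section

/-- A Lie conformal algebra over `ℂ`, encoded via its `n`-th products
`a_(n) b` and the operator `∂ = D`.  The `λ`-bracket is
`[a_λ b] = ∑ₙ (λⁿ/n!) • (a_(n) b)`. -/
structure LieConformalAlgebra (L : Type) [AddCommGroup L] [Module ℂ L] : Type where
  D : L →ₗ[ℂ] L
  prd : ℕ → L →ₗ[ℂ] L →ₗ[ℂ] L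
  bound : ∀ a b : L, ∃ N : ℕ, ∀ n : ℕ, N ≤ n → prd n a b = 0
  sesq : ∀ (n : ℕ) (a b : L), prd n (D a) b = (-(n : ℂ)) • prd (n - 1) a b
  sesq' : ∀ (n : ℕ) (a b : L),
    prd n a (D b) = D (prd n a b) + (n : ℂ) • prd (n - 1) a b
  skew : ∀ (n : ℕ) (a b : L),
    prd n a b
      = - ∑ᶠ j : ℕ, ((-1 : ℂ) ^ (n + j) * ((Nat.factorial j : ℂ))⁻¹) • (⇑D)^[j] (prd (n + j) b a)
  jacobi : ∀ (m n : ℕ) (a b c : L),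
    prd m a (prd n b c) - prd n b (prd m a c)
      = ∑ j ∈ Finset.range (m + 1), (Nat.choose m j : ℂ) • prd (m + n - j) (prd j a b) c

namespace LieConformalAlgebra

variable {L : Type} [AddCommGroup L] [Module ℂ L]

/-- The action of a polynomial `q(∂) ∈ ℂ[∂]` on an element. -/
def applyP (C : LieConformalAlgebra L) (q : Polynomial ℂ) (x : L) : L :=
  q.sum fun k c => c • (⇑C.D)^[k] x

/-- `[a_λ b] = p(∂, λ) • t`, where `p ∈ ℂ[∂][λ]` is a two-variable polynomial
(outer variable `λ`, inner variable `∂`). -/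
def BracketEq (C : LieConformalAlgebra L) (a b t : L) (p : Polynomial (Polynomial ℂ)) : Prop :=
  ∀ n : ℕ, C.prd n a b = (Nat.factorial n : ℂ) • C.applyP (p.coeff n) t

def IsSubalgebra (C : LieConformalAlgebra L) (N : Submodule ℂ L) : Prop :=
  (∀ x ∈ N, C.D x ∈ N) ∧ ∀ n : ℕ, ∀ a ∈ N, ∀ b ∈ N, C.prd n a b ∈ N

def IsIdeal (C : LieConformalAlgebra L) (N : Submodule ℂ L) : Prop :=
  (∀ x ∈ N, C.D x ∈ N) ∧ ∀ (n : ℕ) (a : L), ∀ b ∈ N, C.prd n a b ∈ N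

/-- `L` is finitely generated as a Lie conformal algebra (finite type). -/
def FiniteType (C : LieConformalAlgebra L) : Prop :=
  ∃ s : Finset L, ∀ N : Submodule ℂ L, C.IsSubalgebra N → (s : Set L) ⊆ (N : Set L) → N = ⊤

/-- `L` is finitely generated as a `ℂ[∂]`-module. -/
def FGPolyModule (C : LieConformalAlgebra L) : Prop :=
  ∃ s : Finset L, ∀ N : Submodule ℂ L, (∀ x ∈ N, C.D x ∈ N) → (s : Set L) ⊆ (N : Set L) → N = ⊤

/-- Iterated adjoint action `a₁_(k₁)(a₂_(k₂)(⋯ x))`. -/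
def iterPrd (C : LieConformalAlgebra L) : List (L × ℕ) → L → L
  | [], x => x
  | (a, k) :: t, x => C.prd k a (iterPrd C t x)

/-- The `ℂ[∂]`-rank of the submodule `N` is at most `r`:
any `r+1` elements of `N` are `ℂ[∂]`-linearly dependent. -/
def polyRankLE (C : LieConformalAlgebra L) (N : Submodule ℂ L) (r : ℕ) : Prop :=
  ∀ v : Fin (r + 1) → L, (∀ k, v k ∈ N) →
    ∃ q : Fin (r + 1) → Polynomial ℂ, (∃ k, q k ≠ 0) ∧ ∑ k, C.applyP (q k) (v k) = 0

/-- The family `v` is a free `ℂ[∂]`-basis of `L`. -/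
def IsFreePolyBasis (C : LieConformalAlgebra L) {ι : Type} (v : ι → L) : Prop :=
  LinearIndependent ℂ (fun q : ι × ℕ => (⇑C.D)^[q.2] (v q.1)) ∧
  Submodule.span ℂ (Set.range fun q : ι × ℕ => (⇑C.D)^[q.2] (v q.1)) = ⊤

/-- `[U_λ V]`: the `ℂ`-span of all `u_(n) v`. -/
def bspan (C : LieConformalAlgebra L) (U V : Set L) : Submodule ℂ L :=
  Submodule.span ℂ {x : L | ∃ (n : ℕ) (u : L) (w : L), u ∈ U ∧ w ∈ V ∧ x = C.prd n u w}

end LieConformalAlgebra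

/-- `∂` as an element of `ℂ[∂][λ]`. -/
def Pd : Polynomial (Polynomial ℂ) := Polynomial.C Polynomial.X
/-- `λ` as an element of `ℂ[∂][λ]`. -/
def Pl : Polynomial (Polynomial ℂ) := Polynomial.X
/-- a constant in `ℂ[∂][λ]`. -/
def Pc (a : ℂ) : Polynomial (Polynomial ℂ) := Polynomial.C (Polynomial.C a)

/-- Total degree of a two-variable polynomial in `ℂ[∂][λ]`. -/
def tdeg (p : Polynomial (Polynomial ℂ)) : ℕ :=
  p.support.sup fun n => n + (p.coeff n).natDegree

section ModelPolynomials

/-- structure polynomials of `𝒱(s)` -/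
def pV (s : ℂ) (i j : ℤ) : Polynomial (Polynomial ℂ) :=
  Pd + Pc 2 * Pl + Pc (s * ((i : ℂ) - (j : ℂ)))

/-- structure polynomials of `CL₁(s)` -/
def pCL1 (s : ℂ) (i j : ℤ) : Polynomial (Polynomial ℂ) :=
  Pc ((i : ℂ) + 1) * Pd + Pc ((i : ℂ) + (j : ℂ) + 2) * Pl + Pc (s * ((i : ℂ) - (j : ℂ)))

/-- structure polynomials of `CL₂(b,s)` -/
def pCL2 (b s : ℂ) (i j : ℤ) : Polynomial (Polynomial ℂ) :=
  Pc ((i : ℂ) + b) * Pd + Pc ((i : ℂ) + (j : ℂ) + 2 * b) * Pl + Pc (s * ((i : ℂ) - (j : ℂ)))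

/-- structure polynomials of `SCL₂(b,s)` (for `2b ∈ ℤ`), w.r.t. the basis
`L'ᵢ = Lᵢ (i ≠ -2b)`, `L'_{-2b} = (∂+2s)L_{-2b}` of the corresponding graded
subalgebra of `CL₂(b,s)`. -/
def pSCL2 (b s : ℂ) (i j : ℤ) : Polynomial (Polynomial ℂ) :=
  (if (i : ℂ) = -(2 * b) then Pc (2 * s) - Pl else 1) *
  (if (j : ℂ) = -(2 * b) then Pd + Pl + Pc (2 * s) else 1) *
  (if (i : ℂ) + (j : ℂ) = -(2 * b) then Pc ((i : ℂ) + b) else pCL2 b s i j)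

/-- structure polynomials of `CL₃(s)` -/
def pCL3 (s : ℂ) (i j : ℤ) : Polynomial (Polynomial ℂ) :=
  if i + j = 0 then Pc (i : ℂ) * (Pd + Pc s)
  else if i = 0 then Pc (-(j : ℂ)) * (Pc (2 * s) - Pl)
  else if j = 0 then Pc (i : ℂ) * (Pd + Pl + Pc (2 * s))
  else Pc (i : ℂ) * Pd + Pc ((i : ℂ) + (j : ℂ)) * Pl + Pc (s * ((i : ℂ) - (j : ℂ)))

/-- structure polynomials of `ECL(s)` -/
def pECL (s : ℂ) (i j : ℤ) : Polynomial (Polynomial ℂ) :=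
  if i + j = 0 then Pc (i : ℂ) * (Pd + Pc s) * (Pd + Pc (2 * s))
  else if i = 0 then Pc (-(j : ℂ))
  else if j = 0 then Pc (i : ℂ)
  else Pc (i : ℂ) * Pd + Pc ((i : ℂ) + (j : ℂ)) * Pl + Pc (s * ((i : ℂ) - (j : ℂ)))

/-- structure polynomials of `M(1)` (indices `≥ -1`, completed by skew-symmetry) -/
def pM1 (i j : ℤ) : Polynomial (Polynomial ℂ) :=
  if i = 1 ∧ j = 1 then Pd + Pc 2 * Pl
  else if i = -1 ∧ 1 ≤ j then Pc (((j : ℂ) + 1) * ((j : ℂ) - 2) / 2)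
  else if j = -1 ∧ 1 ≤ i then Pc (-(((i : ℂ) + 1) * ((i : ℂ) - 2) / 2))
  else if i = 0 then Pc (-(j : ℂ))
  else if j = 0 then Pc (i : ℂ)
  else if i = 1 ∧ 2 ≤ j then 1
  else if j = 1 ∧ 2 ≤ i then -1
  else 0

/-- structure polynomials of `M(2)` (completed by skew-symmetry) -/
def pM2 (i j : ℤ) : Polynomial (Polynomial ℂ) :=
  if i = 1 ∧ j = 1 then Pd + Pc 2 * Pl
  else if i = -1 ∧ j = -1 then Pd + Pc 2 * Pl
  else if i = 0 then Pc (-(j : ℂ))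
  else if j = 0 then Pc (i : ℂ)
  else if i = -1 ∧ 1 ≤ j then Pc (((j : ℂ) + 1) * ((j : ℂ) - 2) / 2)
  else if j = -1 ∧ 1 ≤ i then Pc (-(((i : ℂ) + 1) * ((i : ℂ) - 2) / 2))
  else if i = 1 ∧ j ≤ -2 then Pc (((j : ℂ) - 1) * ((j : ℂ) + 2) / 2)
  else if j = 1 ∧ i ≤ -2 then Pc (-(((i : ℂ) - 1) * ((i : ℂ) + 2) / 2))
  else if i = -1 ∧ j ≤ -2 then 1
  else if j = -1 ∧ i ≤ -2 then -1
  else if i = 1 ∧ 2 ≤ j then 1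
  else if j = 1 ∧ 2 ≤ i then -1
  else 0

end ModelPolynomials

namespace LieConformalAlgebra

variable {L : Type} [AddCommGroup L] [Module ℂ L]

/-- `C` is isomorphic to the Virasoro Lie conformal algebra. -/
def IsVir (C : LieConformalAlgebra L) : Prop :=
  ∃ e : L, C.IsFreePolyBasis (fun _ : Unit => e) ∧ C.BracketEq e e e (Pd + Pc 2 * Pl)

/-- `C` is isomorphic to the loop Virasoro Lie conformal algebra `𝒱(s)`. -/
def IsV (C : LieConformalAlgebra L) (s : ℂ) : Prop :=
  ∃ v : ℤ → L, C.IsFreePolyBasis v ∧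
    ∀ i j : ℤ, C.BracketEq (v i) (v j) (v (i + j)) (pV s i j)

/-- `C` is isomorphic to `CL₁(s)`. -/
def IsCL1 (C : LieConformalAlgebra L) (s : ℂ) : Prop :=
  ∃ v : ℤ → L, C.IsFreePolyBasis (fun q : {i : ℤ // -1 ≤ i} => v q.1) ∧
    ∀ i j : ℤ, -1 ≤ i → -1 ≤ j →
      C.BracketEq (v i) (v j) (if -1 ≤ i + j then v (i + j) else 0) (pCL1 s i j)

/-- `C` is isomorphic to `CL₂(b,s)`. -/
def IsCL2 (C : LieConformalAlgebra L) (b s : ℂ) : Prop :=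
  ∃ v : ℤ → L, C.IsFreePolyBasis v ∧
    ∀ i j : ℤ, C.BracketEq (v i) (v j) (v (i + j)) (pCL2 b s i j)

/-- `C` is isomorphic to `SCL₂(b,s)`. -/
def IsSCL2 (C : LieConformalAlgebra L) (b s : ℂ) : Prop :=
  ∃ v : ℤ → L, C.IsFreePolyBasis v ∧
    ∀ i j : ℤ, C.BracketEq (v i) (v j) (v (i + j)) (pSCL2 b s i j)

/-- `C` is isomorphic to `CL₃(s)`. -/
def IsCL3 (C : LieConformalAlgebra L) (s : ℂ) : Prop :=
  ∃ v : ℤ → L, C.IsFreePolyBasis v ∧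
    ∀ i j : ℤ, C.BracketEq (v i) (v j) (v (i + j)) (pCL3 s i j)

/-- `C` is isomorphic to `ECL(s)`. -/
def IsECL (C : LieConformalAlgebra L) (s : ℂ) : Prop :=
  ∃ v : ℤ → L, C.IsFreePolyBasis v ∧
    ∀ i j : ℤ, C.BracketEq (v i) (v j) (v (i + j)) (pECL s i j)

/-- `C` is isomorphic to `M(1)`. -/
def IsM1 (C : LieConformalAlgebra L) : Prop :=
  ∃ v : ℤ → L, C.IsFreePolyBasis (fun q : {i : ℤ // -1 ≤ i} => v q.1) ∧
    ∀ i j : ℤ, -1 ≤ i → -1 ≤ j →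
      C.BracketEq (v i) (v j) (if -1 ≤ i + j then v (i + j) else 0) (pM1 i j)

/-- `C` is isomorphic to `M(2)`. -/
def IsM2 (C : LieConformalAlgebra L) : Prop :=
  ∃ v : ℤ → L, C.IsFreePolyBasis v ∧
    ∀ i j : ℤ, C.BracketEq (v i) (v j) (v (i + j)) (pM2 i j)

/-- `C` is isomorphic to the current Lie conformal algebra `Cur 𝔤`. -/
def IsCur (C : LieConformalAlgebra L) (g : Type) [LieRing g] [LieAlgebra ℂ g] : Prop :=
  ∃ φ : g →ₗ[ℂ] L,
    Function.Bijective (fun f : ℕ →₀ g => f.sum fun k x => (⇑C.D)^[k] (φ x)) ∧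
    (∀ x y : g, C.prd 0 (φ x) (φ y) = φ ⁅x, y⁆) ∧
    ∀ n : ℕ, 1 ≤ n → ∀ x y : g, C.prd n (φ x) (φ y) = 0

/-- `C ≅ Cur sl(2,ℂ)`. -/
def IsCurSl2 (C : LieConformalAlgebra L) : Prop :=
  C.IsCur ↥(LieAlgebra.SpecialLinear.sl (Fin 2) ℂ)

/-- `C ≅ Cur 𝒲`, `𝒲` the Witt algebra (basis `wᵢ`, `[wᵢ,wⱼ] = (j-i)w_{i+j}`). -/
def IsCurWitt (C : LieConformalAlgebra L) : Prop :=
  ∃ v : ℤ → L, C.IsFreePolyBasis v ∧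
    (∀ i j : ℤ, C.prd 0 (v i) (v j) = (((j : ℂ) - (i : ℂ))) • v (i + j)) ∧
    ∀ n : ℕ, 1 ≤ n → ∀ i j : ℤ, C.prd n (v i) (v j) = 0

/-- `C ≅ Cur 𝒲₁`, `𝒲₁` spanned by the `wᵢ`, `i ≥ -1`. -/
def IsCurWitt1 (C : LieConformalAlgebra L) : Prop :=
  ∃ v : ℤ → L, C.IsFreePolyBasis (fun q : {i : ℤ // -1 ≤ i} => v q.1) ∧
    (∀ i j : ℤ, -1 ≤ i → -1 ≤ j →
      C.prd 0 (v i) (v j) = (((j : ℂ) - (i : ℂ))) • (if -1 ≤ i + j then v (i + j) else 0)) ∧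
    ∀ n : ℕ, 1 ≤ n → ∀ i j : ℤ, -1 ≤ i → -1 ≤ j → C.prd n (v i) (v j) = 0

end LieConformalAlgebra

/-- A `ℤ`-graded Lie conformal algebra. -/
structure GradedLCA (L : Type) [AddCommGroup L] [Module ℂ L]
    extends LieConformalAlgebra L where
  G : ℤ → Submodule ℂ L
  internal : DirectSum.IsInternal G
  dGrade : ∀ i : ℤ, ∀ x ∈ G i, D x ∈ G i
  prdGrade : ∀ (i j : ℤ) (n : ℕ), ∀ a ∈ G i, ∀ b ∈ G j, prd n a b ∈ G (i + j)

namespace GradedLCA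

variable {L : Type} [AddCommGroup L] [Module ℂ L]

/-- A graded ideal: an ideal generated by homogeneous elements. -/
def IsGradedIdeal (C : GradedLCA L) (N : Submodule ℂ L) : Prop :=
  C.toLieConformalAlgebra.IsIdeal N ∧ (⨆ i : ℤ, N ⊓ C.G i) = N

/-- `L` is simple graded: nonzero bracket, and the only graded ideals are `⊥` and `⊤`. -/
def IsSimpleGraded (C : GradedLCA L) : Prop :=
  (∃ (n : ℕ) (a b : L), C.prd n a b ≠ 0) ∧
  ∀ N : Submodule ℂ L, C.IsGradedIdeal N → N = ⊥ ∨ N = ⊤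

/-- `[L_λ L] = L`. -/
def Perfect (C : GradedLCA L) : Prop :=
  Submodule.span ℂ {x : L | ∃ (n : ℕ) (a b : L), x = C.prd n a b} = ⊤

/-- Each component `L_i` is a nilpotent `L₀`-module under the adjoint action. -/
def Rootless (C : GradedLCA L) : Prop :=
  ∀ i : ℤ, ∃ n : ℕ, 1 ≤ n ∧ ∀ l : List (L × ℕ), l.length = n →
    (∀ q ∈ l, q.1 ∈ C.G 0) → ∀ x ∈ C.G i, C.toLieConformalAlgebra.iterPrd l x = 0

/-- The ranks of the components are uniformly bounded. -/
def UniformlyBounded (C : GradedLCA L) : Prop :=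
  ∃ N : ℕ, 1 ≤ N ∧ ∀ i : ℤ, C.toLieConformalAlgebra.polyRankLE (C.G i) N

end GradedLCA

/-- A module over a Lie conformal algebra, encoded via the `n`-th actions. -/
structure LCAModule {L : Type} [AddCommGroup L] [Module ℂ L] (C : LieConformalAlgebra L)
    (M : Type) [AddCommGroup M] [Module ℂ M] : Type where
  DM : M →ₗ[ℂ] M
  act : ℕ → L →ₗ[ℂ] M →ₗ[ℂ] M
  bound : ∀ (a : L) (m : M), ∃ N : ℕ, ∀ n : ℕ, N ≤ n → act n a m = 0
  sesq : ∀ (n : ℕ) (a : L) (m : M), act n (C.D a) m = (-(n : ℂ)) • act (n - 1) a m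
  sesq' : ∀ (n : ℕ) (a : L) (m : M),
    act n a (DM m) = DM (act n a m) + (n : ℂ) • act (n - 1) a m
  comm : ∀ (p q : ℕ) (a b : L) (m : M),
    act p a (act q b m) - act q b (act p a m)
      = ∑ j ∈ Finset.range (p + 1), (Nat.choose p j : ℂ) • act (p + q - j) (C.prd j a b) m

namespace LCAModule

variable {L : Type} [AddCommGroup L] [Module ℂ L] {C : LieConformalAlgebra L}
variable {M : Type} [AddCommGroup M] [Module ℂ M]

/-- Iterated action `a₁_(k₁)(a₂_(k₂)(⋯ m))`. -/
def iterAct (ρ : LCAModule C M) : List (L × ℕ) → M → M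
  | [], m => m
  | (a, k) :: t, m => ρ.act k a (iterAct ρ t m)

/-- `N` is an `L`-submodule of `M`. -/
def IsSub (ρ : LCAModule C M) (N : Submodule ℂ M) : Prop :=
  (∀ m ∈ N, ρ.DM m ∈ N) ∧ ∀ (n : ℕ) (a : L), ∀ m ∈ N, ρ.act n a m ∈ N

/-- `M` is a nilpotent module. -/
def Nilpotent (ρ : LCAModule C M) : Prop :=
  ∃ n : ℕ, 1 ≤ n ∧ ∀ l : List (L × ℕ), l.length = n → ∀ m : M, ρ.iterAct l m = 0

/-- `M` is finitely generated as an `L`-module. -/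
def FG (ρ : LCAModule C M) : Prop :=
  ∃ s : Finset M, ∀ N : Submodule ℂ M, ρ.IsSub N → (s : Set M) ⊆ (N : Set M) → N = ⊤

/-- The `L`-submodule `N` is finitely generated as an `L`-module. -/
def FGIn (ρ : LCAModule C M) (N : Submodule ℂ M) : Prop :=
  ∃ s : Finset M, (s : Set M) ⊆ (N : Set M) ∧
    ∀ P : Submodule ℂ M, ρ.IsSub P → (s : Set M) ⊆ (P : Set M) → N ≤ P

/-- `M` is finitely generated as a `ℂ[∂]`-module. -/
def FGPoly (ρ : LCAModule C M) : Prop :=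
  ∃ s : Finset M, ∀ N : Submodule ℂ M, (∀ m ∈ N, ρ.DM m ∈ N) → (s : Set M) ⊆ (N : Set M) → N = ⊤

end LCAModule

/-- A family is `ℂ[∂]`-linearly independent. -/
def polyIndep {M : Type} [AddCommGroup M] [Module ℂ M] (DM : M →ₗ[ℂ] M)
    {r : ℕ} (v : Fin r → M) : Prop :=
  ∀ q : Fin r → Polynomial ℂ,
    (∑ k, (q k).sum fun t c => c • (⇑DM)^[t] (v k)) = 0 → ∀ k, q k = 0

/-- The `ℂ[∂]`-rank of a submodule, in `ℕ∞`. -/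
def polyRank {M : Type} [AddCommGroup M] [Module ℂ M] (DM : M →ₗ[ℂ] M)
    (N : Submodule ℂ M) : ℕ∞ :=
  ⨆ r ∈ {r : ℕ | ∃ v : Fin r → M, (∀ k, v k ∈ N) ∧ polyIndep DM v}, (r : ℕ∞)

/-- A graded module over a `ℤ`-graded Lie conformal algebra. -/
structure GradedLCAModule {L : Type} [AddCommGroup L] [Module ℂ L] (C : GradedLCA L)
    (M : Type) [AddCommGroup M] [Module ℂ M]
    extends LCAModule C.toLieConformalAlgebra M where
  GM : ℤ → Submodule ℂ M
  internal : DirectSum.IsInternal GM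
  dGrade : ∀ i : ℤ, ∀ m ∈ GM i, DM m ∈ GM i
  actGrade : ∀ (i j : ℤ) (n : ℕ), ∀ a ∈ C.G i, ∀ m ∈ GM j, act n a m ∈ GM (i + j)

namespace GradedLCAModule

variable {L : Type} [AddCommGroup L] [Module ℂ L] {C : GradedLCA L}
variable {M : Type} [AddCommGroup M] [Module ℂ M]

/-- `Mⁿ = ⊕_{|i| ≤ n} M_i`. -/
def seg (ρ : GradedLCAModule C M) (n : ℕ) : Submodule ℂ M :=
  ⨆ i : ℤ, ⨆ _ : |i| ≤ (n : ℤ), ρ.GM i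

/-- `e(M) = liminf (1/n) rank_{ℂ[∂]} Mⁿ`. -/
def eM (ρ : GradedLCAModule C M) : ℝ≥0∞ :=
  Filter.atTop.liminf fun n : ℕ => (polyRank ρ.DM (ρ.seg n) : ℝ≥0∞) / (n : ℝ≥0∞)

/-- Each `M_i` is a nilpotent `L₀`-module. -/
def Weightless (ρ : GradedLCAModule C M) : Prop :=
  ∀ i : ℤ, ∃ n : ℕ, 1 ≤ n ∧ ∀ l : List (L × ℕ), l.length = n →
    (∀ q ∈ l, q.1 ∈ C.G 0) → ∀ m ∈ ρ.GM i, ρ.toLCAModule.iterAct l m = 0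

/-- The submodule `I(M)` generated by all homogeneous `v` lying in the span of
the iterated actions of `L` on `v`. -/
def IM (ρ : GradedLCAModule C M) : Submodule ℂ M :=
  sInf {N : Submodule ℂ M | ρ.toLCAModule.IsSub N ∧
    {v : M | (∃ i : ℤ, v ∈ ρ.GM i) ∧
      v ∈ Submodule.span ℂ
        {w : M | ∃ l : List (L × ℕ), 1 ≤ l.length ∧ w = ρ.toLCAModule.iterAct l v}} ⊆ N}

end GradedLCAModule

/-- The structure context for graded Lie conformal algebras all of whose
nonzero components are free of rank one over `ℂ[∂]`: fixed homogeneous bases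
`bas i` and structure polynomials `sp i j ∈ ℂ[∂][λ]`, with `0 ∈ Supp(L)` and
`L₀` abelian. -/
structure RankOneContext (L : Type) [AddCommGroup L] [Module ℂ L]
    extends GradedLCA L where
  bas : ℤ → L
  sp : ℤ → ℤ → Polynomial (Polynomial ℂ)
  bas_mem : ∀ i : ℤ, bas i ∈ G i
  bas_zero : ∀ i : ℤ, G i = ⊥ → bas i = 0
  bas_indep : ∀ i : ℤ, G i ≠ ⊥ → LinearIndependent ℂ fun k : ℕ => (⇑D)^[k] (bas i)
  bas_span : ∀ i : ℤ, G i ≠ ⊥ →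
    G i = Submodule.span ℂ (Set.range fun k : ℕ => (⇑D)^[k] (bas i))
  sp_brkt : ∀ (i j : ℤ) (n : ℕ),
    prd n (bas i) (bas j)
      = (Nat.factorial n : ℂ) • (((sp i j).coeff n).sum fun k c => c • (⇑D)^[k] (bas (i + j)))
  sp_zero : ∀ i j : ℤ, (G i = ⊥ ∨ G j = ⊥ ∨ G (i + j) = ⊥) → sp i j = 0
  supp_zero : G 0 ≠ ⊥
  abelian0 : ∀ n : ℕ, ∀ x ∈ G 0, ∀ y ∈ G 0, prd n x y = 0

/-- A Lie conformal algebra of class `𝒱`. -/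
structure ClassV (L : Type) [AddCommGroup L] [Module ℂ L]
    extends RankOneContext L where
  supp_one : G 1 ≠ ⊥
  supp_negone : G (-1) ≠ ⊥
  genV : ∀ N : Submodule ℂ L, (∀ x ∈ N, D x ∈ N) →
    (∀ n : ℕ, ∀ a ∈ N, ∀ b ∈ N, prd n a b ∈ N) →
    G 1 ≤ N → G 0 ≤ N → G (-1) ≤ N → N = ⊤
  ne_m11 : sp (-1) 1 ≠ 0
  ne_01 : sp 0 1 ≠ 0

/-!
Evaluating `∂`, `λ` and `μ` at complex numbers turns skew-symmetry and the Jacobi identity into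
identities between values of the structure polynomials `p_{i,j}`. Since `L₋₁`, `L₀`, `L₁` generate,
`L₀` acts on every nonzero `L_i` by the weight `i f(λ)`, where `f = p_{0,1}`. The Jacobi identity
for `(L₀, L_i, L_j)` then leaves only `p_{i,j} = a (i ∂ + (i + j) λ) + b` when `i`, `j`, `i + j`
are nonzero, and makes `p_{i,-i}` independent of `λ` when `i ≠ 0`. As `deg f = 2`, the Jacobi
identities for `(L₁, L₋₁, L₁)` and `(L₁, L₋₁, L₂)` force `f = α (λ - s) (λ - 2s)` and make
`p_{1,-1}` a nonzero constant.

Comparing the Jacobi identity for `(L₁, L₋₁, L_{n+1})` with the one in `SCL₂(0,s)`, one sees by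
induction on `n` that `p_{1,n}` and `p_{-1,n+1}` are multiples of those of `SCL₂(0,s)` by two
factors whose product is nonzero and independent of `n`. A rescaling of the basis makes them equal,
and the Jacobi identity for `(L_{±1}, L_i, L_k)` carries the equality over to all `p_{i,j}`.
-/

/-! ### The `λ`-bracket at a complex number -/

open Filter in
theorem eventually_atTop_forall_eq_zero {M : Type*} [Zero M] {f : ℕ → ℕ → M}
    (hf : ∀ᶠ j in atTop, ∀ k, f j k = 0) (hf' : ∀ j, ∀ᶠ k in atTop, f j k = 0) :
    ∀ᶠ k in atTop, ∀ j, f j k = 0 := by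
  obtain ⟨N, hN⟩ := eventually_atTop.1 hf
  filter_upwards [(eventually_all_finset (Finset.range N)).2 fun j _ => hf' j] with k hk j
  by_cases hj : j < N
  · exact hk j (Finset.mem_range.2 hj)
  · exact hN j (not_lt.1 hj) k

theorem sum_range_sum_antidiagonal {M : Type*} [AddCommMonoid M] {f : ℕ → ℕ → M} {N : ℕ}
    (hf : ∀ j k, N ≤ j + k → f j k = 0) :
    ∑ p ∈ Finset.range N, ∑ x ∈ Finset.HasAntidiagonal.antidiagonal p, f x.1 x.2 =
      ∑ j ∈ Finset.range N, ∑ k ∈ Finset.range N, f j k := by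
  simp only [Finset.Nat.sum_antidiagonal_eq_sum_range_succ f, Nat.succ_eq_add_one]
  rw [Finset.sum_range_diag_flip]
  refine Finset.sum_congr rfl fun j _ => Finset.sum_subset ?_ fun k _ hk => hf j k ?_
  · exact Finset.range_mono (Nat.sub_le N j)
  · rw [Finset.mem_range] at hk
    omega

/-- The divided power `lⁿ / n!`, the coefficient of the `n`-th product in the `λ`-bracket
at `λ = l`. -/
def divPow {K : Type*} [Field K] (l : K) (n : ℕ) : K := l ^ n / n.factorial

section DivPow

variable {K : Type*} [Field K] [CharZero K]

theorem divPow_succ_mul (l : K) (n : ℕ) : divPow l (n + 1) * (n + 1 : ℕ) = l * divPow l n := by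
  have := Nat.cast_ne_zero (R := K).2 n.factorial_ne_zero
  have := Nat.cast_ne_zero (R := K).2 n.succ_ne_zero
  simp only [divPow, Nat.factorial_succ, Nat.cast_mul]
  field_simp
  ring

theorem divPow_mul_choose (l : K) (i j : ℕ) :
    divPow l (i + j) * ((i + j).choose i : K) = divPow l i * divPow l j := by
  have hi := Nat.cast_ne_zero (R := K).2 i.factorial_ne_zero
  have hj := Nat.cast_ne_zero (R := K).2 j.factorial_ne_zero
  have hij := Nat.cast_ne_zero (R := K).2 (i + j).factorial_ne_zero
  rw [Nat.cast_add_choose]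
  simp only [divPow]
  field_simp
  rw [pow_add]

theorem divPow_add (l m : K) (n : ℕ) : divPow (l + m) n =
    ∑ x ∈ Finset.HasAntidiagonal.antidiagonal n, divPow l x.1 * divPow m x.2 := by
  rw [divPow, (Commute.all l m).add_pow', Finset.sum_div]
  refine Finset.sum_congr rfl fun x hx => ?_
  obtain rfl := Finset.HasAntidiagonal.mem_antidiagonal.1 hx
  have h₁ := Nat.cast_ne_zero (R := K).2 x.1.factorial_ne_zero
  have h₂ := Nat.cast_ne_zero (R := K).2 x.2.factorial_ne_zero
  have h := Nat.cast_ne_zero (R := K).2 (x.1 + x.2).factorial_ne_zero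
  simp only [divPow, nsmul_eq_mul, Nat.cast_add_choose]
  field_simp

end DivPow

theorem map_aeval_apply_of_forall_map_eq {R V W : Type*} [CommRing R] [AddCommGroup V]
    [Module R V] [AddCommGroup W] [Module R W] {T : V →ₗ[R] W} {f : V →ₗ[R] V} {g : W →ₗ[R] W}
    (h : ∀ x, T (f x) = g (T x)) (q : R[X]) (x : V) : T (aeval f q x) = aeval g q (T x) := by
  have hpow (n : ℕ) : T ((f ^ n) x) = (g ^ n) (T x) := by
    induction n with
    | zero => rfl
    | succ n ih => rw [pow_succ', Module.End.mul_apply, h, ih, pow_succ', Module.End.mul_apply]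
  simp only [aeval_eq_sum_range, LinearMap.sum_apply, LinearMap.smul_apply, map_sum, map_smul, hpow]

namespace LieConformalAlgebra

variable {L : Type} [AddCommGroup L] [Module ℂ L] (A : LieConformalAlgebra L)

theorem applyP_eq_aeval (q : ℂ[X]) (x : L) : A.applyP q x = aeval A.D q x := by
  simp [applyP, aeval_eq_sum_range, sum_over_range, LinearMap.sum_apply, Module.End.pow_apply]

theorem eventually_prd_eq_zero (a b : L) : ∀ᶠ n in Filter.atTop, A.prd n a b = 0 :=
  Filter.eventually_atTop.2 (A.bound a b)

theorem hasFiniteSupport_divPow_smul_prd (l : ℂ) (a b : L) :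
    (fun n => divPow l n • A.prd n a b).HasFiniteSupport := by
  obtain ⟨N, hN⟩ := A.bound a b
  refine (Finset.range N).finite_toSet.subset fun n hn => ?_
  by_contra h
  exact hn (by simp [hN n (by simpa using h)])

open Filter in
theorem eventually_prd_prd_right_eq_zero (a b c : L) :
    ∀ᶠ p in atTop, ∀ n, A.prd p a (A.prd n b c) = 0 :=
  eventually_atTop_forall_eq_zero
    ((A.eventually_prd_eq_zero b c).mono fun n hn p => by rw [hn, map_zero])
    fun n => A.eventually_prd_eq_zero a (A.prd n b c)

open Filter in
theorem eventually_prd_prd_left_eq_zero (a b c : L) :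
    ∀ᶠ p in atTop, ∀ n, A.prd p (A.prd n a b) c = 0 :=
  eventually_atTop_forall_eq_zero
    ((A.eventually_prd_eq_zero a b).mono fun n hn p => by rw [hn, map_zero, LinearMap.zero_apply])
    fun n => A.eventually_prd_eq_zero (A.prd n a b) c

/-- The value `[a_λ b]` of the `λ`-bracket at a complex number `λ = l`. -/
def bracketAt (l : ℂ) : L →ₗ[ℂ] L →ₗ[ℂ] L :=
  LinearMap.mk₂ ℂ (fun a b => ∑ᶠ n, divPow l n • A.prd n a b)
    (fun a a' b => by
      simp only [map_add, LinearMap.add_apply, smul_add]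
      exact finsum_add_distrib (A.hasFiniteSupport_divPow_smul_prd l a b)
        (A.hasFiniteSupport_divPow_smul_prd l a' b))
    (fun t a b => by
      simp only [map_smul, LinearMap.smul_apply, smul_comm _ t]
      exact (smul_finsum t _).symm)
    (fun a b b' => by
      simp only [map_add, smul_add]
      exact finsum_add_distrib (A.hasFiniteSupport_divPow_smul_prd l a b)
        (A.hasFiniteSupport_divPow_smul_prd l a b'))
    (fun t a b => by
      simp only [map_smul, smul_comm _ t]
      exact (smul_finsum t _).symm)

variable {A}

theorem bracketAt_eq_sum_range (l : ℂ) {a b : L} {N : ℕ} (h : ∀ n, N ≤ n → A.prd n a b = 0) :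
    A.bracketAt l a b = ∑ n ∈ Finset.range N, divPow l n • A.prd n a b := by
  refine finsum_eq_sum_of_support_subset _ fun n hn => ?_
  by_contra hnN
  exact hn (by simp [h n (by simpa using hnN)])

variable (A)

theorem bracketAt_D_left (l : ℂ) (a b : L) :
    A.bracketAt l (A.D a) b = -l • A.bracketAt l a b := by
  obtain ⟨N, hN⟩ := A.bound a b
  have hN' (n) (hn : N + 1 ≤ n) : A.prd n (A.D a) b = 0 := by
    rw [A.sesq, hN _ (by omega), smul_zero]
  rw [bracketAt_eq_sum_range l hN, bracketAt_eq_sum_range l hN', Finset.sum_range_succ',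
    Finset.smul_sum, A.sesq, Nat.cast_zero, neg_zero, zero_smul, smul_zero, add_zero]
  refine Finset.sum_congr rfl fun n _ => ?_
  rw [A.sesq, smul_smul, smul_smul, mul_neg, divPow_succ_mul, neg_mul, Nat.add_sub_cancel]

theorem bracketAt_D_right (l : ℂ) (a b : L) :
    A.bracketAt l a (A.D b) = (A.D + l • 1) (A.bracketAt l a b) := by
  obtain ⟨N, hN⟩ := A.bound a b
  have hN₁ (n) (hn : N + 1 ≤ n) : A.prd n a b = 0 := hN n (by omega)
  have hN' (n) (hn : N + 1 ≤ n) : A.prd n a (A.D b) = 0 := by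
    rw [A.sesq', hN _ (by omega), hN _ (by omega), smul_zero, map_zero, add_zero]
  have hD : A.D (A.bracketAt l a b) =
      ∑ n ∈ Finset.range (N + 1), divPow l n • A.D (A.prd n a b) := by
    simp only [bracketAt_eq_sum_range l hN₁, map_sum, map_smul]
  have hl : l • A.bracketAt l a b =
      ∑ n ∈ Finset.range (N + 1), divPow l n • ((n : ℂ) • A.prd (n - 1) a b) := by
    rw [bracketAt_eq_sum_range l hN, Finset.sum_range_succ', Finset.smul_sum, Nat.cast_zero,
      zero_smul, smul_zero, add_zero]
    refine Finset.sum_congr rfl fun n _ => ?_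
    rw [smul_smul, smul_smul, divPow_succ_mul, Nat.add_sub_cancel]
  rw [bracketAt_eq_sum_range l hN', LinearMap.add_apply, LinearMap.smul_apply,
    Module.End.one_apply, hD, hl, ← Finset.sum_add_distrib]
  simp only [A.sesq', smul_add]

theorem bracketAt_aeval_left (l : ℂ) (q : ℂ[X]) (a b : L) :
    A.bracketAt l (aeval A.D q a) b = q.eval (-l) • A.bracketAt l a b := by
  have := map_aeval_apply_of_forall_map_eq (T := (A.bracketAt l).flip b)
    (g := algebraMap ℂ (Module.End ℂ L) (-l)) (fun x => A.bracketAt_D_left l x b) q a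
  rwa [aeval_algebraMap_apply, coe_aeval_eq_eval] at this

theorem bracketAt_aeval_right (l : ℂ) (q : ℂ[X]) (a b : L) :
    A.bracketAt l a (aeval A.D q b) = aeval A.D (taylor l q) (A.bracketAt l a b) := by
  rw [map_aeval_apply_of_forall_map_eq (A.bracketAt_D_right l a) q b, taylor_apply, aeval_comp,
    map_add, aeval_X, aeval_C, Algebra.algebraMap_eq_smul_one]

variable {A}

theorem bracketAt_bracketAt_eq_sum {l m : ℂ} {a b c : L} {N : ℕ}
    (h : ∀ n, N ≤ n → A.prd n b c = 0) (h' : ∀ p, N ≤ p → ∀ n, A.prd p a (A.prd n b c) = 0) :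
    A.bracketAt l a (A.bracketAt m b c) = ∑ p ∈ Finset.range N, ∑ n ∈ Finset.range N,
      (divPow l p * divPow m n) • A.prd p a (A.prd n b c) := by
  rw [bracketAt_eq_sum_range m h, map_sum, Finset.sum_comm]
  refine Finset.sum_congr rfl fun n _ => ?_
  rw [map_smul, bracketAt_eq_sum_range l fun p hp => h' p hp n, Finset.smul_sum]
  simp only [smul_smul, mul_comm]

theorem bracketAt_add_bracketAt_eq_sum {l m : ℂ} {a b c : L} {N : ℕ}
    (h : ∀ n, N ≤ n → A.prd n a b = 0) (h' : ∀ p, N ≤ p → ∀ n, A.prd p (A.prd n a b) c = 0) :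
    A.bracketAt (l + m) (A.bracketAt l a b) c =
      ∑ j ∈ Finset.range N, ∑ t ∈ Finset.range N, ∑ n ∈ Finset.range N,
        (divPow l j * divPow l t * divPow m n) • A.prd (t + n) (A.prd j a b) c := by
  rw [bracketAt_eq_sum_range l h, map_sum, LinearMap.sum_apply]
  refine Finset.sum_congr rfl fun j _ => ?_
  rw [← sum_range_sum_antidiagonal fun t n htn => by rw [h' _ htn, smul_zero], map_smul,
    LinearMap.smul_apply, bracketAt_eq_sum_range (l + m) fun p hp => h' p hp j, Finset.smul_sum]
  refine Finset.sum_congr rfl fun p _ => ?_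
  rw [divPow_add, Finset.sum_smul, Finset.smul_sum]
  refine Finset.sum_congr rfl fun x hx => ?_
  rw [smul_smul, ← Finset.HasAntidiagonal.mem_antidiagonal.1 hx, mul_assoc]

variable (A)

theorem divPow_smul_jacobi (l μ : ℂ) (p n : ℕ) (a b c : L) :
    (divPow l p * μ) • (A.prd p a (A.prd n b c) - A.prd n b (A.prd p a c)) =
      ∑ x ∈ Finset.HasAntidiagonal.antidiagonal p, (divPow l x.1 * divPow l x.2 * μ) •
        A.prd (x.2 + n) (A.prd x.1 a b) c := by
  rw [A.jacobi, ← Nat.succ_eq_add_one, ← Finset.Nat.sum_antidiagonal_eq_sum_range_succ_mk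
      (fun x => (p.choose x.1 : ℂ) • A.prd (p + n - x.1) (A.prd x.1 a b) c) p, Finset.smul_sum]
  refine Finset.sum_congr rfl fun x hx => ?_
  obtain rfl := Finset.HasAntidiagonal.mem_antidiagonal.1 hx
  rw [smul_smul, mul_right_comm, divPow_mul_choose, add_assoc, Nat.add_sub_cancel_left]

theorem bracketAt_jacobi (l m : ℂ) (a b c : L) :
    A.bracketAt l a (A.bracketAt m b c) =
      A.bracketAt (l + m) (A.bracketAt l a b) c + A.bracketAt m b (A.bracketAt l a c) := by
  obtain ⟨N, hN⟩ := Filter.eventually_atTop.1 <| (A.eventually_prd_eq_zero a b).and <|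
    (A.eventually_prd_eq_zero b c).and <| (A.eventually_prd_eq_zero a c).and <|
    (A.eventually_prd_prd_right_eq_zero a b c).and <|
    (A.eventually_prd_prd_right_eq_zero b a c).and (A.eventually_prd_prd_left_eq_zero a b c)
  simp only [forall_and] at hN
  obtain ⟨hab, hbc, hac, ha, hb, hc⟩ := hN
  have hM {P : ℕ → Prop} (h : ∀ n, N ≤ n → P n) (n) (hn : N + N ≤ n) : P n := h n (by omega)
  have hvanish (n) (j t) (hjt : N + N ≤ j + t) :
      (divPow l j * divPow l t * divPow m n) • A.prd (t + n) (A.prd j a b) c = 0 := by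
    rcases (by omega : N ≤ j ∨ N ≤ t) with hj | ht
    · rw [hab j hj, map_zero, LinearMap.zero_apply, smul_zero]
    · rw [hc _ (by omega), smul_zero]
  rw [← sub_eq_iff_eq_add]
  calc A.bracketAt l a (A.bracketAt m b c) - A.bracketAt m b (A.bracketAt l a c)
      = ∑ n ∈ Finset.range (N + N), ∑ p ∈ Finset.range (N + N), (divPow l p * divPow m n) •
          (A.prd p a (A.prd n b c) - A.prd n b (A.prd p a c)) := by
        rw [bracketAt_bracketAt_eq_sum (hM hbc) (hM ha),
          bracketAt_bracketAt_eq_sum (hM hac) (hM hb), Finset.sum_comm]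
        simp only [smul_sub, Finset.sum_sub_distrib, mul_comm]
    _ = ∑ n ∈ Finset.range (N + N), ∑ j ∈ Finset.range (N + N), ∑ t ∈ Finset.range (N + N),
          (divPow l j * divPow l t * divPow m n) • A.prd (t + n) (A.prd j a b) c := by
        refine Finset.sum_congr rfl fun n _ => ?_
        rw [← sum_range_sum_antidiagonal (hvanish n)]
        exact Finset.sum_congr rfl fun p _ => A.divPow_smul_jacobi l (divPow m n) p n a b c
    _ = A.bracketAt (l + m) (A.bracketAt l a b) c := by
        rw [bracketAt_add_bracketAt_eq_sum (hM hab) (hM hc), Finset.sum_comm]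
        exact Finset.sum_congr rfl fun j _ => Finset.sum_comm

end LieConformalAlgebra

/-! ### Identities between values of structure polynomials -/

theorem eval_eval_eq_evalEval {R : Type*} [CommRing R] (x : R) (r : R[X]) (p : R[X][X]) :
    eval x (eval r p) = evalEval x (eval x r) p := by
  rw [← coe_evalRingHom, ← eval₂_at_apply, ← eval_map, map_evalRingHom_eval]

theorem evalEval_taylor_X_comp_neg_X {R : Type*} [CommRing R] (x y : R) (q : R[X][X]) :
    evalEval x y (taylor X (q.comp (C (-1) * X))) = evalEval x (-y - x) q := by
  rw [evalEval, taylor_eval, eval_comp, eval_eval_eq_evalEval]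
  congr 1
  simp only [eval_mul, eval_add, eval_neg, eval_one, eval_C, eval_X, C_neg, C_1]
  ring

theorem coeff_taylor_X_comp_neg_X {R : Type*} [CommRing R] (q : R[X][X]) (n : ℕ) {N : ℕ}
    (hN : q.natDegree < N) :
    (taylor X (q.comp (C (-1) * X))).coeff n = ∑ k ∈ Finset.range N,
      ((-1) ^ (n + k) * ((n + k).choose n : R)) • (X ^ k * q.coeff (n + k)) := by
  have hdeg : (hasseDeriv n (q.comp (C (-1) * X))).natDegree < N :=
    calc (hasseDeriv n (q.comp (C (-1) * X))).natDegree
        ≤ (q.comp (C (-1) * X)).natDegree := (natDegree_hasseDeriv_le _ _).trans (Nat.sub_le _ _)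
      _ ≤ q.natDegree * (C (-1) * X : R[X][X]).natDegree := natDegree_comp_le
      _ ≤ q.natDegree * 1 := Nat.mul_le_mul_left _ ((natDegree_C_mul_le _ _).trans natDegree_X_le)
      _ < N := by rwa [mul_one]
  rw [taylor_coeff, eval_eq_sum_range' hdeg]
  refine Finset.sum_congr rfl fun k _ => ?_
  rw [hasseDeriv_coeff, comp_C_mul_X_coeff, add_comm k n, smul_eq_C_mul, C_mul, C_pow, C_neg,
    C_1, C_eq_natCast]
  ring

namespace RankOneContext

variable {L : Type} [AddCommGroup L] [Module ℂ L] (A : RankOneContext L)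

theorem aeval_bas_injective {k : ℤ} (hk : A.G k ≠ ⊥) :
    Function.Injective fun q : ℂ[X] => aeval A.D q (A.bas k) := by
  let T : ℂ[X] →ₗ[ℂ] L := (aeval A.D).toLinearMap.flip (A.bas k)
  refine (injective_iff_map_eq_zero T).2 fun q hq => ?_
  have hsum : ∑ n ∈ Finset.range (q.natDegree + 1), q.coeff n • (⇑A.D)^[n] (A.bas k) = 0 := by
    simpa [T, aeval_eq_sum_range, LinearMap.sum_apply, Module.End.pow_apply] using hq
  ext n
  by_cases hn : n < q.natDegree + 1
  · exact linearIndependent_iff'.1 (A.bas_indep k hk) _ _ hsum n (Finset.mem_range.2 hn)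
  · rw [coeff_eq_zero_of_natDegree_lt (by omega), coeff_zero]

theorem prd_bas (i j : ℤ) (n : ℕ) : A.prd n (A.bas i) (A.bas j) =
    (n.factorial : ℂ) • aeval A.D ((A.sp i j).coeff n) (A.bas (i + j)) := by
  rw [A.sp_brkt, ← A.applyP_eq_aeval]
  rfl

theorem bracketEq_bas (i j : ℤ) :
    A.BracketEq (A.bas i) (A.bas j) (A.bas (i + j)) (A.sp i j) :=
  A.sp_brkt i j

theorem bracketAt_bas (i j : ℤ) (l : ℂ) : A.bracketAt l (A.bas i) (A.bas j) =
    aeval A.D ((A.sp i j).eval (C l)) (A.bas (i + j)) := by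
  have hN (n) (hn : (A.sp i j).natDegree + 1 ≤ n) : A.prd n (A.bas i) (A.bas j) = 0 := by
    rw [prd_bas, coeff_eq_zero_of_natDegree_lt hn, map_zero, LinearMap.zero_apply, smul_zero]
  rw [LieConformalAlgebra.bracketAt_eq_sum_range l hN, eval_eq_sum_range, map_sum,
    LinearMap.sum_apply]
  refine Finset.sum_congr rfl fun n _ => ?_
  rw [prd_bas, smul_smul, divPow, div_mul_cancel₀ _ (Nat.cast_ne_zero.2 n.factorial_ne_zero),
    mul_comm, ← C_pow, ← smul_eq_C_mul, map_smul, LinearMap.smul_apply]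

theorem sp_jacobi (i j k : ℤ) (x l m : ℂ) :
    evalEval (x + l) m (A.sp j k) * evalEval x l (A.sp i (j + k)) =
      evalEval (-l - m) l (A.sp i j) * evalEval x (l + m) (A.sp (i + j) k) +
        evalEval (x + m) l (A.sp i k) * evalEval x m (A.sp j (i + k)) := by
  by_cases hG : A.G (i + j + k) = ⊥
  · rw [A.sp_zero i (j + k) (by simp [← add_assoc, hG]), A.sp_zero (i + j) k (by simp [hG]),
      A.sp_zero j (i + k) (by simp [← add_assoc, add_comm j i, hG])]
    simp only [evalEval_zero, mul_zero, add_zero]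
  have key := A.bracketAt_jacobi l m (A.bas i) (A.bas j) (A.bas k)
  simp only [bracketAt_bas, LieConformalAlgebra.bracketAt_aeval_left,
    LieConformalAlgebra.bracketAt_aeval_right] at key
  rw [← add_assoc i j k, add_left_comm j i k, ← add_assoc i j k, ← LinearMap.smul_apply,
    ← map_smul] at key
  simp only [← Module.End.mul_apply, ← map_mul, ← LinearMap.add_apply, ← map_add] at key
  have := congrArg (eval x) (A.aeval_bas_injective hG key)
  simp only [eval_add, eval_mul, eval_smul, taylor_eval, smul_eq_mul] at this
  simpa only [evalEval, neg_add'] using this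

theorem sp_eq_neg_taylor (i j : ℤ) :
    A.sp i j = -taylor X ((A.sp j i).comp (C (-1) * X)) := by
  by_cases hG : A.G (i + j) = ⊥
  · rw [A.sp_zero i j (by simp [hG]), A.sp_zero j i (by simp [add_comm j i, hG])]
    simp
  ext1 n
  apply A.aeval_bas_injective hG
  set q := A.sp j i with hq
  have hn : (n.factorial : ℂ) ≠ 0 := Nat.cast_ne_zero.2 n.factorial_ne_zero
  have hcoeff (k) : q.natDegree + 1 ≤ k → A.prd (n + k) (A.bas j) (A.bas i) = 0 := fun hk => by
    rw [prd_bas, ← hq, coeff_eq_zero_of_natDegree_lt (by omega), map_zero, LinearMap.zero_apply,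
      smul_zero]
  have hskew := A.skew n (A.bas i) (A.bas j)
  rw [finsum_eq_sum_of_support_subset (s := Finset.range (q.natDegree + 1)) _
    (fun k hk => by
      by_contra h
      exact hk (by simp [hcoeff k (by simpa using h)])), prd_bas] at hskew
  apply smul_right_injective L hn
  beta_reduce
  rw [hskew, coeff_neg, map_neg, LinearMap.neg_apply, smul_neg,
    coeff_taylor_X_comp_neg_X q n q.natDegree.lt_succ_self, map_sum, LinearMap.sum_apply,
    Finset.smul_sum]
  refine congrArg _ (Finset.sum_congr rfl fun k _ => ?_)
  have hk : (k.factorial : ℂ) ≠ 0 := Nat.cast_ne_zero.2 k.factorial_ne_zero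
  rw [prd_bas, ← hq, ← Module.End.pow_apply, map_smul, map_smul, LinearMap.smul_apply, map_mul,
    map_pow, aeval_X, Module.End.mul_apply, add_comm j i, smul_smul, smul_smul,
    Nat.cast_add_choose]
  congr 1
  field_simp

theorem sp_skew (i j : ℤ) (x y : ℂ) :
    evalEval x y (A.sp i j) = -evalEval x (-y - x) (A.sp j i) := by
  rw [sp_eq_neg_taylor, evalEval_neg, evalEval_taylor_X_comp_neg_X]

theorem prd_eq_zero_of_sp_eq_zero {i j : ℤ} (h : A.sp i j = 0) (n : ℕ) {a b : L}
    (ha : a ∈ A.G i) (hb : b ∈ A.G j) : A.prd n a b = 0 := by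
  have hbas (k k' : ℕ) (n) : A.prd n ((⇑A.D)^[k] (A.bas i)) ((⇑A.D)^[k'] (A.bas j)) = 0 := by
    induction k' generalizing n with
    | zero =>
      induction k generalizing n with
      | zero => simp [prd_bas, h]
      | succ k ih => rw [Function.iterate_succ_apply', A.sesq, ih, smul_zero]
    | succ k' ih =>
      rw [Function.iterate_succ_apply', A.sesq', ih, ih, smul_zero, map_zero, add_zero]
  rcases eq_or_ne (A.G i) ⊥ with hi | hi
  · rw [(Submodule.eq_bot_iff _).1 hi a ha, map_zero, LinearMap.zero_apply]
  rcases eq_or_ne (A.G j) ⊥ with hj | hj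
  · rw [(Submodule.eq_bot_iff _).1 hj b hb, map_zero]
  rw [A.bas_span i hi] at ha
  rw [A.bas_span j hj] at hb
  have hker : Submodule.map₂ (A.prd n)
      (Submodule.span ℂ (Set.range fun k : ℕ => (⇑A.D)^[k] (A.bas i)))
      (Submodule.span ℂ (Set.range fun k : ℕ => (⇑A.D)^[k] (A.bas j))) ≤ ⊥ := by
    rw [Submodule.map₂_span_span, Submodule.span_le]
    rintro _ ⟨_, ⟨k, rfl⟩, _, ⟨k', rfl⟩, rfl⟩
    exact hbas k k' n
  exact (Submodule.mem_bot ℂ).1 (Submodule.map₂_le.1 hker a ha b hb)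

theorem isFreePolyBasis_bas (hG : ∀ i, A.G i ≠ ⊥) : A.IsFreePolyBasis A.bas := by
  let b (i : ℤ) : Module.Basis ℕ ℂ (A.G i) := (Module.Basis.span (A.bas_indep i (hG i))).map
    (LinearEquiv.ofEq _ _ (A.bas_span i (hG i)).symm)
  let B := (A.internal.collectedBasis b).reindex (Equiv.sigmaEquivProd ℤ ℕ)
  have hB : ⇑B = fun q : ℤ × ℕ => (⇑A.D)^[q.2] (A.bas q.1) := by
    ext q
    simp [B, b, DirectSum.IsInternal.collectedBasis_coe, Module.Basis.span_apply]
  rw [LieConformalAlgebra.IsFreePolyBasis, ← hB]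
  exact ⟨B.linearIndependent, B.span_eq⟩

end RankOneContext

/-! ### The action of `L₀` -/

section Polynomial

section Semiring

variable {R : Type*} [Semiring R]

theorem exists_map_C_eq {p : R[X][X]} (hp : ∀ n, (p.coeff n).natDegree = 0) :
    ∃ f : R[X], f.map C = p :=
  (mem_lifts p).1 <| (lifts_iff_coeff_lifts p).2 fun n => natDegree_eq_zero.1 (hp n)

theorem coeff_taylor_of_natDegree_le {q : R[X]} {N : ℕ} (hN : q.natDegree ≤ N) (l : R) :
    (taylor l q).coeff N = q.coeff N := by
  rcases hN.lt_or_eq with h | rfl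
  · rw [coeff_eq_zero_of_natDegree_lt h, coeff_eq_zero_of_natDegree_lt (by rwa [natDegree_taylor])]
  · rw [coeff_taylor_natDegree, coeff_natDegree]

end Semiring

variable {R : Type*} [CommRing R] [IsDomain R]

theorem eq_C_of_mul_taylor_eq {p q : R[X]} {b l : R} (hq : q ≠ 0)
    (h : p * taylor l q = C b * q) : p = C b := by
  rcases eq_or_ne b 0 with rfl | hb
  · rw [C_0, zero_mul, mul_eq_zero, taylor_eq_zero] at h
    rw [h.resolve_right hq, C_0]
  have hdeg : p.natDegree = 0 := by
    have hp : p ≠ 0 := by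
      rintro rfl
      simp [hb, hq] at h
    have := congrArg natDegree h
    rw [natDegree_mul hp (by simpa), natDegree_taylor, natDegree_C_mul hb] at this
    omega
  obtain ⟨a, rfl⟩ := natDegree_eq_zero.1 hdeg
  have := congrArg leadingCoeff h
  rw [leadingCoeff_mul, leadingCoeff_mul, leadingCoeff_taylor, leadingCoeff_C, leadingCoeff_C]
    at this
  rw [mul_right_cancel₀ (leadingCoeff_ne_zero.2 hq) this]

variable [Infinite R]

theorem eq_of_forall_evalEval_eq {p q : R[X][X]} (h : ∀ x y, evalEval x y p = evalEval x y q) :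
    p = q := by
  ext1 n
  refine funext fun x => ?_
  have : p.map (evalRingHom x) = q.map (evalRingHom x) := funext fun y => by
    simpa only [map_evalRingHom_eval] using h x y
  simpa only [coeff_map, coe_evalRingHom] using congrArg (coeff · n) this

theorem exists_evalEval_ne_zero {p : R[X][X]} (hp : p ≠ 0) : ∃ x y, evalEval x y p ≠ 0 := by
  contrapose! hp
  exact eq_of_forall_evalEval_eq fun x y => by rw [hp, evalEval_zero]

theorem eq_C_add_of_forall_mul_evalEval_add_eq {p : R[X][X]} (hp : p ≠ 0) {q : R[X]} {b c l : R}
    (h : ∀ x y, q.eval x * evalEval (x + l) y p =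
      b * evalEval x (l + y) p + c * evalEval x y p) : q = C (b + c) := by
  refine eq_C_of_mul_taylor_eq (leadingCoeff_ne_zero.2 hp) (funext fun x => ?_) (l := l)
  have hx : C (q.eval x) * p.map (evalRingHom (x + l)) =
      C b * taylor l (p.map (evalRingHom x)) + C c * p.map (evalRingHom x) := funext fun y => by
    simpa only [eval_add, eval_mul, eval_C, taylor_eval, map_evalRingHom_eval, add_comm y]
      using h x y
  have := congrArg (coeff · p.natDegree) hx
  simp only [coeff_add, coeff_C_mul, coeff_taylor_of_natDegree_le natDegree_map_le, coeff_map,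
    coeff_natDegree, coe_evalRingHom] at this
  rw [eval_mul, taylor_eval, this, eval_mul, eval_C, add_mul]

end Polynomial

/-- The identities satisfied by the structure polynomials `p i j` of a `ℤ`-graded Lie conformal
algebra with a homogeneous `ℂ[∂]`-basis `L i`: skew-symmetry and the Jacobi identity, read off at
the values `∂ = x`, `λ = l`, `μ = m`. -/
structure IsStructureFamily (p : ℤ → ℤ → ℂ[X][X]) : Prop where
  skew (i j : ℤ) (x l : ℂ) : evalEval x l (p i j) = -evalEval x (-l - x) (p j i)
  jacobi (i j k : ℤ) (x l m : ℂ) :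
    evalEval (x + l) m (p j k) * evalEval x l (p i (j + k)) =
      evalEval (-l - m) l (p i j) * evalEval x (l + m) (p (i + j) k) +
        evalEval (x + m) l (p i k) * evalEval x m (p j (i + k))

/-- In the family `p` of structure polynomials, `L₀` acts on `L_i` by the weight `w`, i.e.
`p_{0,i}(∂, λ) = w(λ)`. -/
def HasWeight (p : ℤ → ℤ → ℂ[X][X]) (i : ℤ) (w : ℂ[X]) : Prop := p 0 i = w.map C

section HasWeight

variable {p : ℤ → ℤ → ℂ[X][X]} {i j : ℤ} {u v w : ℂ[X]}

theorem HasWeight.evalEval_eq (h : HasWeight p i w) (x l : ℂ) :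
    evalEval x l (p 0 i) = w.eval l := by
  rw [h, evalEval_map_C]

theorem hasWeight_of_forall_eval (h : ∀ l, (p 0 i).eval (C l) = C (w.eval l)) :
    HasWeight p i w :=
  eq_of_forall_evalEval_eq fun x l => by rw [evalEval_map_C, evalEval, h, eval_C]

theorem HasWeight.add (hp : IsStructureFamily p) (hi : HasWeight p i u) (hj : HasWeight p j v)
    (hij : p i j ≠ 0) : HasWeight p (i + j) (u + v) := by
  refine hasWeight_of_forall_eval fun l => ?_
  rw [eval_add]
  refine eq_C_add_of_forall_mul_evalEval_add_eq hij (l := l) fun x y => ?_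
  have := hp.jacobi 0 i j x l y
  rwa [hi.evalEval_eq, hj.evalEval_eq, zero_add, zero_add, mul_comm] at this

theorem HasWeight.neg_of_add_eq_zero (hp : IsStructureFamily p) (h₀ : HasWeight p 0 0)
    (hj : HasWeight p j v) (h : i + j = 0) (hij : p i j ≠ 0) : HasWeight p i (-v) := by
  obtain ⟨x, y, hxy⟩ := exists_evalEval_ne_zero hij
  refine hasWeight_of_forall_eval fun l => ?_
  have hq : (p i j).map (evalRingHom x) ≠ 0 := by
    intro h₀
    rw [← map_evalRingHom_eval, h₀, eval_zero] at hxy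
    exact hxy rfl
  have hcomp : ((p 0 i).eval (C l)).comp (-X - C l) = C ((-v).eval l) := by
    refine eq_C_of_mul_taylor_eq (l := l) hq (funext fun m => ?_)
    have := hp.jacobi 0 i j x l m
    rw [h, h₀.evalEval_eq, hj.evalEval_eq, zero_add, zero_add, eval_zero, mul_zero] at this
    simp only [eval_mul, eval_comp, taylor_eval, map_evalRingHom_eval, eval_sub, eval_neg, eval_X,
      eval_C, add_comm m l]
    rw [evalEval, neg_sub_comm] at this
    linear_combination -this
  have := congrArg (comp · (-X - C l)) hcomp
  simpa [comp_assoc] using this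

end HasWeight

namespace RankOneContext

variable {L : Type} [AddCommGroup L] [Module ℂ L] (A : RankOneContext L)

theorem isStructureFamily : IsStructureFamily A.sp := ⟨A.sp_skew, A.sp_jacobi⟩

theorem hasWeight_zero : HasWeight A.sp 0 0 := by
  rw [HasWeight, Polynomial.map_zero]
  ext1 n
  apply A.aeval_bas_injective A.supp_zero
  have := A.abelian0 n _ (A.bas_mem 0) _ (A.bas_mem 0)
  rw [prd_bas] at this
  simpa [n.factorial_ne_zero] using this

end RankOneContext

namespace ClassV

variable {L : Type} [AddCommGroup L] [Module ℂ L] (A : ClassV L)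

theorem support_induction {P : ℤ → Prop} (one : P 1) (zero : P 0) (neg_one : P (-1))
    (add : ∀ i j, P i → P j → A.sp i j ≠ 0 → P (i + j)) {i : ℤ} (hi : A.G i ≠ ⊥) : P i := by
  let N : Submodule ℂ L := ⨆ (i : ℤ) (_ : P i), A.G i
  have hle (i) (hi : P i) : A.G i ≤ N := le_iSup₂_of_le i hi le_rfl
  have hD : N ≤ N.comap A.D := iSup₂_le fun j hj x hx => hle j hj (A.dGrade j x hx)
  have hprd (n : ℕ) : Submodule.map₂ (A.prd n) N N ≤ N := by
    simp only [N, Submodule.map₂_iSup_left, Submodule.map₂_iSup_right]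
    refine iSup₂_le fun j hj => iSup₂_le fun i hi => Submodule.map₂_le.2 fun a ha b hb => ?_
    rcases eq_or_ne (A.sp i j) 0 with hij | hij
    · rw [A.prd_eq_zero_of_sp_eq_zero hij n ha hb]
      exact zero_mem _
    · exact hle _ (add i j hi hj hij) (A.prdGrade i j n a ha b hb)
  have htop : N = ⊤ := A.genV N hD (fun n a ha b hb => hprd n (Submodule.apply_mem_map₂ _ ha hb))
    (hle 1 one) (hle 0 zero) (hle (-1) neg_one)
  by_contra hPi
  have hN : N ≤ ⨆ (j : ℤ) (_ : j ≠ i), A.G j :=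
    iSup₂_le fun j hj => le_iSup₂_of_le j (by rintro rfl; exact hPi hj) le_rfl
  have hindep := A.internal.submodule_iSupIndep i
  rw [eq_top_iff.2 (htop.ge.trans hN), disjoint_top] at hindep
  exact hi hindep

end ClassV

theorem exists_eq_C_mul_X_add_C_of_eval_add {K : Type*} [Field K] [CharZero K] {g : K[X]}
    (h : ∀ x y, g.eval (x + y) + g.eval 0 = g.eval x + g.eval y) :
    ∃ a b, g = C a * X + C b := by
  have hder : derivative g = C (g.coeff 1) := funext fun y => by
    have hy : taylor y g = g + C (g.eval y - g.eval 0) := funext fun x => by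
      rw [taylor_eval, eval_add, eval_C]
      linear_combination h x y
    rw [← taylor_coeff_one, hy, coeff_add, coeff_C_succ, add_zero, eval_C]
  refine ⟨g.coeff 1, (g - C (g.coeff 1) * X).coeff 0, ?_⟩
  rw [← eq_C_of_derivative_eq_zero, add_sub_cancel]
  rw [derivative_sub, hder, derivative_C_mul, derivative_X, mul_one, sub_self]

/-- A family of structure polynomials for which `L₀` acts on `L_{±1}` by the weights `±f`, and
which satisfies the equation to which the Jacobi identity for `(L₀, L_i, L_j)` reduces when `L₀`
acts on every nonzero `L_k` by the weight `k f`. -/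
structure IsWeightedFamily (p : ℤ → ℤ → ℂ[X][X]) (f : ℂ[X]) : Prop extends
    IsStructureFamily p where
  weight_one : HasWeight p 1 f
  weight_neg_one : HasWeight p (-1) (-f)
  shift (i j : ℤ) (x l m : ℂ) : (i + j) * evalEval (x + l) m (p i j) =
    i * evalEval x (l + m) (p i j) + j * evalEval x m (p i j)

namespace HasWeight

variable {p : ℤ → ℤ → ℂ[X][X]} {i j : ℤ} {f : ℂ[X]}

theorem shift (hp : IsStructureFamily p) (hf : f ≠ 0) (hi : HasWeight p i (C (i : ℂ) * f))
    (hj : HasWeight p j (C (j : ℂ) * f)) (hij : HasWeight p (i + j) (C ((i + j : ℤ) : ℂ) * f))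
    (x l m : ℂ) : (i + j) * evalEval (x + l) m (p i j) =
      i * evalEval x (l + m) (p i j) + j * evalEval x m (p i j) := by
  have h : C (i + j : ℂ) * ((p i j).eval (C m)).comp (X + C x) =
      C (i : ℂ) * taylor m ((p i j).map (evalRingHom x)) + C (j * evalEval x m (p i j)) := by
    refine mul_left_cancel₀ hf (funext fun l => ?_)
    have := hp.jacobi 0 i j x l m
    rw [hi.evalEval_eq, hj.evalEval_eq, hij.evalEval_eq, zero_add, zero_add] at this
    simp only [eval_mul, eval_C, Int.cast_add] at this
    simp only [eval_mul, eval_add, eval_C, eval_comp, eval_X, taylor_eval, map_evalRingHom_eval,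
      ← evalEval.eq_def, add_comm l x]
    linear_combination this
  simpa only [eval_mul, eval_add, eval_C, eval_comp, eval_X, taylor_eval, map_evalRingHom_eval,
    ← evalEval.eq_def, add_comm l x] using congrArg (eval l) h

end HasWeight

namespace ClassV

variable {L : Type} [AddCommGroup L] [Module ℂ L] {A : ClassV L}

theorem hasWeight {f : ℂ[X]} (hf : HasWeight A.sp 1 f) {i : ℤ} (hi : A.G i ≠ ⊥) :
    HasWeight A.sp i (C (i : ℂ) * f) := by
  refine A.support_induction (P := fun i => HasWeight A.sp i (C (i : ℂ) * f)) ?_ ?_ ?_ ?_ hi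
  · simpa using hf
  · simpa using A.hasWeight_zero
  · simpa using
      HasWeight.neg_of_add_eq_zero A.isStructureFamily A.hasWeight_zero hf (by norm_num) A.ne_m11
  · intro i j hi hj hij
    simpa [add_mul] using hi.add A.isStructureFamily hj hij

theorem isWeightedFamily {f : ℂ[X]} (hf : HasWeight A.sp 1 f) : IsWeightedFamily A.sp f where
  toIsStructureFamily := A.isStructureFamily
  weight_one := hf
  weight_neg_one := by simpa using hasWeight hf A.supp_negone
  shift i j x l m := by
    have hf₀ : f ≠ 0 := by
      rintro rfl
      exact A.ne_01 (hf.trans (Polynomial.map_zero _))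
    by_cases h : A.G i = ⊥ ∨ A.G j = ⊥ ∨ A.G (i + j) = ⊥
    · simp only [A.sp_zero i j h, evalEval_zero, mul_zero, add_zero]
    · obtain ⟨hi, hj, hij⟩ := by simpa only [not_or] using h
      exact HasWeight.shift A.isStructureFamily hf₀ (hasWeight hf hi) (hasWeight hf hj)
        (hasWeight hf hij) x l m

end ClassV

namespace IsWeightedFamily

variable {p : ℤ → ℤ → ℂ[X][X]} {f : ℂ[X]} (hp : IsWeightedFamily p f)
include hp

theorem neg : IsWeightedFamily (fun i j => p (-i) (-j)) (-f) where
  skew i j := hp.skew (-i) (-j)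
  jacobi i j k x l m := by simpa only [neg_add] using hp.jacobi (-i) (-j) (-k) x l m
  weight_one := by simpa only [HasWeight, neg_zero] using hp.weight_neg_one
  weight_neg_one := by simpa only [HasWeight, neg_zero, neg_neg] using hp.weight_one
  shift i j x l m := by
    have := hp.shift (-i) (-j) x l m
    push_cast at this
    linear_combination -this

theorem evalEval_one_zero (x l : ℂ) : evalEval x l (p 1 0) = -f.eval (-l - x) := by
  rw [hp.skew, hp.weight_one.evalEval_eq]

theorem evalEval_eq_of_add_eq_zero {i j : ℤ} (hi : i ≠ 0) (hij : i + j = 0) (x l : ℂ) :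
    evalEval x l (p i j) = evalEval x 0 (p i j) := by
  have hj : (j : ℂ) = -i := by exact_mod_cast (neg_eq_of_add_eq_zero_right hij).symm
  have := hp.shift i j x l 0
  rw [hj, add_neg_cancel, zero_mul, add_zero] at this
  refine mul_left_cancel₀ (Int.cast_ne_zero.2 hi : (i : ℂ) ≠ 0) ?_
  linear_combination -this

theorem exists_affine {i j : ℤ} (hi : i ≠ 0) (hj : j ≠ 0) (hij : i + j ≠ 0) :
    ∃ a b : ℂ, ∀ x l, evalEval x l (p i j) = a * (i * x + (i + j) * l) + b := by
  have hj' : ((i : ℂ) + j) * j ≠ 0 := by exact_mod_cast mul_ne_zero hij hj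
  have hi' : (i : ℂ) ≠ 0 := Int.cast_ne_zero.2 hi
  have hsolve (x l) : i * evalEval x l (p i j) =
      (i + j) * evalEval (x + l) 0 (p i j) - j * evalEval x 0 (p i j) := by
    have := hp.shift i j x l 0
    rw [add_zero] at this
    linear_combination -this
  obtain ⟨a, b, hab⟩ := exists_eq_C_mul_X_add_C_of_eval_add (g := (p i j).eval 0) fun l m => by
    have := hp.shift i j 0 l m
    have h₁ := hsolve l m
    have h₂ := hsolve 0 (l + m)
    have h₃ := hsolve 0 m
    simp only [evalEval, C_0, zero_add] at this h₁ h₂ h₃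
    refine mul_left_cancel₀ hj' ?_
    linear_combination i * this - (i + j) * h₁ + i * h₂ + j * h₃
  have hg (x) : evalEval x 0 (p i j) = a * x + b := by
    rw [evalEval, C_0, hab]
    simp only [eval_add, eval_mul, eval_C, eval_X]
  refine ⟨a / i, b, fun x l => mul_left_cancel₀ hi' ?_⟩
  rw [hsolve, hg, hg]
  field_simp
  ring

end IsWeightedFamily

/-! ### The structure polynomials of `SCL₂(b,s)` -/

namespace IsStructureFamily

variable {p q : ℤ → ℤ → ℂ[X][X]}

section ChangeOfBasis

variable {ω : ℤ → ℂ[X]} (hq : IsStructureFamily q) (hω : ∀ i, ω i ≠ 0)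
  -- This is how structure polynomials transform when the basis `L_i` is replaced by `ω_i(∂) L_i`.
  (h : ∀ i j x l, (ω (i + j)).eval x * evalEval x l (p i j) =
    (ω i).eval (-l) * (ω j).eval (x + l) * evalEval x l (q i j))
include hq hω h

theorem skew_of_forall_mul_eq (i j : ℤ) (x l : ℂ) :
    evalEval x l (p i j) = -evalEval x (-l - x) (p j i) := by
  have hr (x) (r : ℂ[X][X]) : eval x (r.eval (-C l - X)) = evalEval x (-l - x) r := by
    rw [eval_eval_eq_evalEval, eval_sub, eval_neg, eval_C, eval_X]
  have key : (p i j).eval (C l) = -(p j i).eval (-C l - X) := by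
    refine mul_left_cancel₀ (hω (i + j)) (funext fun x => ?_)
    have hij := h i j x l
    have hji := h j i x (-l - x)
    rw [add_comm j i, show -(-l - x) = x + l by ring, show x + (-l - x) = -l by ring] at hji
    rw [hq.skew] at hij
    rw [eval_mul, eval_mul, eval_neg, hr]
    linear_combination hij + hji
  simpa only [eval_neg, hr] using congrArg (eval x) key

theorem jacobi_of_forall_mul_eq (i j k : ℤ) (x l m : ℂ) :
    evalEval (x + l) m (p j k) * evalEval x l (p i (j + k)) =
      evalEval (-l - m) l (p i j) * evalEval x (l + m) (p (i + j) k) +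
        evalEval (x + m) l (p i k) * evalEval x m (p j (i + k)) := by
  have key : taylor l ((p j k).eval (C m)) * (p i (j + k)).eval (C l) =
      C (evalEval (-l - m) l (p i j)) * (p (i + j) k).eval (C (l + m)) +
        taylor m ((p i k).eval (C l)) * (p j (i + k)).eval (C m) := by
    refine mul_left_cancel₀ (hω (i + j + k)) (funext fun x => ?_)
    have h₁ := h i (j + k) x l
    have h₂ := h (i + j) k x (l + m)
    have h₃ := h j (i + k) x m
    have h₄ := h j k (x + l) m
    have h₅ := h i j (-l - m) l
    have h₆ := h i k (x + m) l
    rw [← add_assoc] at h₁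
    rw [← add_assoc, neg_add'] at h₂
    rw [← add_assoc, add_comm j i] at h₃
    rw [show -l - m + l = -m by ring] at h₅
    rw [add_right_comm x m l] at h₆
    simp only [eval_mul, eval_add, taylor_eval, eval_C, ← evalEval.eq_def]
    linear_combination evalEval (x + l) m (p j k) * h₁ +
      (ω i).eval (-l) * evalEval x l (q i (j + k)) * h₄ -
      evalEval (-l - m) l (p i j) * h₂ -
      (ω k).eval (x + l + m) * evalEval x (l + m) (q (i + j) k) * h₅ -
      evalEval (x + m) l (p i k) * h₃ -
      (ω j).eval (-m) * evalEval x m (q j (i + k)) * h₆ +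
      (ω i).eval (-l) * (ω j).eval (-m) * (ω k).eval (x + l + m) * hq.jacobi i j k x l m
  simpa only [eval_mul, eval_add, taylor_eval, eval_C, ← evalEval.eq_def] using
    congrArg (eval x) key

theorem of_forall_mul_eq : IsStructureFamily p :=
  ⟨skew_of_forall_mul_eq hq hω h, jacobi_of_forall_mul_eq hq hω h⟩

end ChangeOfBasis

theorem row_add_eq {u i : ℤ} (hp : IsStructureFamily p) (hq : IsStructureFamily q)
    (hu : p u = q u) (hi : p i = q i) (h : ∀ n, ∃ l, evalEval n l (p u i) ≠ 0) :
    p (u + i) = q (u + i) := by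
  ext1 k
  refine eq_of_forall_evalEval_eq fun x n => ?_
  obtain ⟨l, hl⟩ := h (-n)
  have h₁ := hp.jacobi u i k x l (n - l)
  have h₂ := hq.jacobi u i k x l (n - l)
  rw [neg_sub_left, sub_add_cancel, add_sub_cancel] at h₁ h₂
  rw [hu, hi] at h₁
  rw [hu] at hl
  refine mul_left_cancel₀ hl ?_
  linear_combination h₂ - h₁

end IsStructureFamily

@[simp]
theorem evalEval_pCL2 (b s : ℂ) (i j : ℤ) (x l : ℂ) :
    evalEval x l (pCL2 b s i j) = (i + b) * x + (i + j + 2 * b) * l + s * (i - j) := by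
  simp [pCL2, Pc, Pd, Pl, evalEval_C]

theorem isStructureFamily_pCL2 (b s : ℂ) : IsStructureFamily (pCL2 b s) where
  skew i j x l := by
    simp only [evalEval_pCL2]
    ring
  jacobi i j k x l m := by
    simp only [evalEval_pCL2]
    push_cast
    ring

theorem isStructureFamily_pSCL2 (b s : ℂ) : IsStructureFamily (pSCL2 b s) := by
  let ω (i : ℤ) : ℂ[X] := if (i : ℂ) = -(2 * b) then X + C (2 * s) else 1
  refine (isStructureFamily_pCL2 b s).of_forall_mul_eq (ω := ω) (fun i => ?_) fun i j x l => ?_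
  · dsimp only [ω]
    split_ifs
    exacts [X_add_C_ne_zero _, one_ne_zero]
  have hi : evalEval x l (if (i : ℂ) = -(2 * b) then Pc (2 * s) - Pl else 1) =
      (ω i).eval (-l) := by
    dsimp only [ω]
    split_ifs
    · simp [Pc, Pl, evalEval_C, neg_add_eq_sub]
    · simp
  have hj : evalEval x l (if (j : ℂ) = -(2 * b) then Pd + Pl + Pc (2 * s) else 1) =
      (ω j).eval (x + l) := by
    dsimp only [ω]
    split_ifs
    · simp [Pc, Pl, Pd, evalEval_C]
    · simp
  have hij : (ω (i + j)).eval x *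
      evalEval x l (if (i : ℂ) + j = -(2 * b) then Pc (i + b) else pCL2 b s i j) =
        evalEval x l (pCL2 b s i j) := by
    simp only [ω, Int.cast_add]
    split_ifs with h
    · rw [evalEval_pCL2, h, eq_neg_add_of_add_eq h]
      simp only [Pc, evalEval_C, eval_add, eval_X, eval_C]
      ring
    · simp
  rw [pSCL2, evalEval_mul, evalEval_mul, hi, hj, ← hij]
  ring

theorem evalEval_pSCL2_zero (s : ℂ) (i j : ℤ) (x l : ℂ) : evalEval x l (pSCL2 0 s i j) =
    (if i = 0 then 2 * s - l else 1) * (if j = 0 then x + l + 2 * s else 1) *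
      (if i + j = 0 then (i : ℂ) else i * x + (i + j) * l + s * (i - j)) := by
  have hij : (i : ℂ) + j = 0 ↔ i + j = 0 := by norm_cast
  rw [pSCL2, evalEval_mul, evalEval_mul]
  simp only [mul_zero, neg_zero, add_zero, Int.cast_eq_zero, hij]
  congr 2
  · split_ifs <;> simp [Pc, Pl, evalEval_C]
  · split_ifs <;> simp [Pc, Pl, Pd, evalEval_C]
  · split_ifs <;> simp [Pc]

theorem pSCL2_zero_neg_neg (s : ℂ) (i j : ℤ) : pSCL2 0 s (-i) (-j) = -pSCL2 0 s i j := by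
  refine eq_of_forall_evalEval_eq fun x l => ?_
  simp only [evalEval_neg, evalEval_pSCL2_zero, neg_eq_zero, ← neg_add]
  split_ifs <;> push_cast <;> ring

theorem exists_evalEval_pSCL2_zero_ne_zero (s : ℂ) {i j : ℤ} (hi : i ≠ 0) (hj : j ≠ 0)
    (hij : i + j ≠ 0) (x : ℂ) : ∃ l, evalEval x l (pSCL2 0 s i j) ≠ 0 := by
  have hij' : (i : ℂ) + j ≠ 0 := by exact_mod_cast hij
  refine ⟨(1 - i * x - s * (i - j)) / (i + j), ?_⟩
  rw [evalEval_pSCL2_zero, if_neg hi, if_neg hj, if_neg hij, mul_div_cancel₀ _ hij']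
  ring_nf
  exact one_ne_zero

theorem IsStructureFamily.eq_pSCL2_zero {p : ℤ → ℤ → ℂ[X][X]} {s : ℂ}
    (hp : IsStructureFamily p) (hone : p 1 = pSCL2 0 s 1) (hneg : p (-1) = pSCL2 0 s (-1)) :
    p = pSCL2 0 s := by
  have hM := isStructureFamily_pSCL2 0 s
  have hnonneg (n : ℕ) : p (n + 1) = pSCL2 0 s (n + 1) := by
    induction n with
    | zero => simpa using hone
    | succ n ih =>
      have := hp.row_add_eq hM hone ih fun x => hone ▸
        exists_evalEval_pSCL2_zero_ne_zero s (by omega) (by omega) (by omega) x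
      simpa only [Nat.cast_succ, add_comm (1 : ℤ)] using this
  have hnonpos (n : ℕ) : p (-(n + 1)) = pSCL2 0 s (-(n + 1)) := by
    induction n with
    | zero => simpa using hneg
    | succ n ih =>
      have := hp.row_add_eq hM hneg ih fun x => hneg ▸
        exists_evalEval_pSCL2_zero_ne_zero s (by omega) (by omega) (by omega) x
      simpa only [Nat.cast_succ, ← neg_add, add_comm (1 : ℤ)] using this
  ext1 i
  obtain hi | rfl | hi := lt_trichotomy i 0
  · obtain ⟨n, rfl⟩ := Int.eq_negSucc_of_lt_zero hi
    exact hnonpos n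
  · refine hp.row_add_eq hM hone hneg fun x => ⟨0, ?_⟩
    simp [hone, evalEval_pSCL2_zero]
  · obtain ⟨n, rfl⟩ := Int.eq_succ_of_zero_lt hi
    exact hnonneg n

namespace IsWeightedFamily

variable {p : ℤ → ℤ → ℂ[X][X]} {f : ℂ[X]} (hp : IsWeightedFamily p f)
include hp

theorem evalEval_neg_one_one (x l : ℂ) :
    evalEval x l (p (-1) 1) = -evalEval x 0 (p 1 (-1)) := by
  rw [hp.skew, hp.evalEval_eq_of_add_eq_zero one_ne_zero (by norm_num)]

theorem hasWeight_two (h : p 1 1 ≠ 0) : HasWeight p 2 (C 2 * f) := by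
  rw [show (C 2 : ℂ[X]) * f = f + f by rw [C_ofNat, two_mul]]
  exact hp.weight_one.add hp.toIsStructureFamily hp.weight_one h

theorem exists_evalEval_one_one :
    ∃ a : ℂ, ∀ x l, evalEval x l (p 1 1) = a * (x + 2 * l) := by
  obtain ⟨a, b, hab⟩ := hp.exists_affine one_ne_zero one_ne_zero two_ne_zero
  have hb := hp.skew 1 1 0 0
  simp only [hab] at hb
  refine ⟨a, fun x l => ?_⟩
  rw [hab]
  push_cast at hb ⊢
  linear_combination hb / 2

-- This is the Jacobi identity for `(L₁, L₋₁, L₁)` at `∂ = 0` and `λ = -μ = u`.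
theorem evalEval_mul_eval_neg {a c d : ℂ}
    (h₁₁ : ∀ x l, evalEval x l (p 1 1) = a * (x + 2 * l))
    (h₁₂ : ∀ x l, evalEval x l (p (-1) 2) = c * (-x + l) + d) (u : ℂ) :
    evalEval u 0 (p 1 (-1)) * f.eval (-u) =
      evalEval 0 0 (p 1 (-1)) * f.eval 0 + a * u * (d - c * u) := by
  have := hp.jacobi 1 (-1) 1 0 u (-u)
  rw [neg_add_cancel 1, add_neg_cancel 1, one_add_one_eq_two, h₁₁, h₁₂, hp.evalEval_neg_one_one,
    hp.evalEval_one_zero, hp.weight_one.evalEval_eq, add_neg_cancel, sub_neg_eq_add,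
    neg_add_cancel, hp.evalEval_eq_of_add_eq_zero one_ne_zero (add_neg_cancel 1) 0 u] at this
  rw [zero_add, sub_zero] at this
  linear_combination this

theorem exists_forall_evalEval_one_neg_one_eq {a c d : ℂ} (hf : f.natDegree = 2)
    (h₀ : p (-1) 1 ≠ 0) (h₁₁ : ∀ x l, evalEval x l (p 1 1) = a * (x + 2 * l))
    (h₁₂ : ∀ x l, evalEval x l (p (-1) 2) = c * (-x + l) + d) :
    ∃ g ≠ 0, ∀ x l, evalEval x l (p 1 (-1)) = g := by
  obtain ⟨q, hq⟩ : ∃ q : ℂ[X], ∀ x l, evalEval x l (p 1 (-1)) = q.eval x :=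
    ⟨(p 1 (-1)).eval 0, fun x l => by
      rw [hp.evalEval_eq_of_add_eq_zero one_ne_zero (add_neg_cancel 1), evalEval, C_0]⟩
  have hprod : q * f.comp (-X) =
      C (-(a * c)) * X ^ 2 + C (a * d) * X + C (q.eval 0 * f.eval 0) := funext fun u => by
    have := hp.evalEval_mul_eval_neg h₁₁ h₁₂ u
    rw [hq, hq] at this
    simp only [eval_mul, eval_comp, eval_add, eval_neg, eval_C, eval_pow, eval_X]
    linear_combination this
  have hq₀ : q ≠ 0 := by
    rintro rfl
    refine h₀ (eq_of_forall_evalEval_eq fun x l => ?_)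
    rw [hp.evalEval_neg_one_one, hq, eval_zero, neg_zero, evalEval_zero]
  have hcomp : (f.comp (-X)).natDegree = 2 := by
    rw [natDegree_comp, natDegree_neg, natDegree_X, mul_one, hf]
  have hdeg : q.natDegree + 2 ≤ 2 :=
    calc q.natDegree + 2 = (q * f.comp (-X)).natDegree := by
          rw [natDegree_mul hq₀ (ne_zero_of_natDegree_gt (hcomp ▸ two_pos)), hcomp]
      _ ≤ 2 := hprod ▸ natDegree_quadratic_le
  obtain ⟨g, rfl⟩ := natDegree_eq_zero.1 (Nat.le_zero.1 (Nat.le_of_add_le_add_right hdeg))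
  exact ⟨g, C_ne_zero.1 hq₀, fun x l => by rw [hq, eval_C]⟩

theorem C_mul_eq {a c d g : ℂ} (hg : ∀ x l, evalEval x l (p 1 (-1)) = g)
    (h₁₁ : ∀ x l, evalEval x l (p 1 1) = a * (x + 2 * l))
    (h₁₂ : ∀ x l, evalEval x l (p (-1) 2) = c * (-x + l) + d) :
    C g * f = C (-(a * c)) * X ^ 2 + C (-(a * d)) * X + C (g * f.eval 0) := funext fun u => by
  have := hp.evalEval_mul_eval_neg h₁₁ h₁₂ (-u)
  rw [hg, hg, neg_neg] at this
  simp only [eval_mul, eval_add, eval_C, eval_pow, eval_X]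
  linear_combination this

theorem exists_mul_eval_eq {a c d g : ℂ} (hac : a * c ≠ 0)
    (hg : ∀ x l, evalEval x l (p 1 (-1)) = g)
    (h₁₁ : ∀ x l, evalEval x l (p 1 1) = a * (x + 2 * l))
    (h₁₂ : ∀ x l, evalEval x l (p (-1) 2) = c * (-x + l) + d) :
    ∃ s, ∀ t, 2 * g * f.eval t = a * (s - t) * (c * (2 * t - s) + d) := by
  obtain ⟨A, B, hA⟩ := hp.exists_affine one_ne_zero two_ne_zero three_ne_zero
  obtain ⟨A', B', hA'⟩ := hp.exists_affine (i := -1) (j := 3) (by norm_num) three_ne_zero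
    (by norm_num)
  have hf₂ : HasWeight p 2 (C 2 * f) := hp.hasWeight_two <| by
    rintro h
    have := h₁₁ 1 0
    simp only [h, evalEval_zero] at this
    exact hac (by linear_combination -c * this)
  -- The Jacobi identity for `(L₁, L₋₁, L₂)`; `s` is chosen so that its last product vanishes.
  have key (x l m) : (c * (m - x - l) + d) * (a * (x + 2 * l)) = 2 * g * f.eval (l + m) +
      (A * (x + m + 3 * l) + B) * (A' * (2 * m - x) + B') := by
    have := hp.jacobi 1 (-1) 2 x l m
    norm_num only [h₁₁, h₁₂, hA, hA', hg, hf₂.evalEval_eq, eval_mul, eval_C] at this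
    linear_combination this
  have hA₀ : A ≠ 0 := by
    rintro rfl
    exact hac (by linear_combination (key 1 0 0 + key (-1) 0 0 - 2 * key 0 0 0) / -2)
  refine ⟨-B / A, fun t => ?_⟩
  have hs : A * (-B / A - t + t + 3 * 0) + B = 0 := by field_simp; ring
  have := key (-B / A - t) 0 t
  rw [hs, zero_add] at this
  linear_combination -this

theorem exists_weight_eq (hf : f.natDegree = 2) (h₀ : p (-1) 1 ≠ 0) :
    ∃ s α g : ℂ, α * g ≠ 0 ∧ f = C α * (X - C s) * (X - C (2 * s)) ∧
      ∀ x l, evalEval x l (p 1 (-1)) = g := by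
  obtain ⟨a, h₁₁⟩ := hp.exists_evalEval_one_one
  obtain ⟨c, d, h₁₂⟩ := hp.exists_affine (i := -1) (j := 2) (by norm_num) two_ne_zero
    (by norm_num)
  norm_num only [neg_one_mul, one_mul] at h₁₂
  obtain ⟨g, hg₀, hg⟩ := hp.exists_forall_evalEval_one_neg_one_eq hf h₀ h₁₁ h₁₂
  have hf₁ := hp.C_mul_eq hg h₁₁ h₁₂
  have hac : a * c ≠ 0 := by
    have h₂ := congrArg (coeff · 2) hf₁
    simp only [coeff_C_mul, coeff_add, coeff_X_pow_self, coeff_X, coeff_C] at h₂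
    have : f.coeff 2 ≠ 0 := hf ▸ leadingCoeff_ne_zero.2 (ne_zero_of_natDegree_gt (hf ▸ two_pos))
    rintro hac
    refine mul_ne_zero hg₀ this ?_
    simpa [hac] using h₂
  obtain ⟨s, hs⟩ := hp.exists_mul_eval_eq hac hg h₁₁ h₁₂
  have hg₁ (t) : g * f.eval t = -(a * c) * t ^ 2 - a * d * t + g * f.eval 0 := by
    have := congrArg (eval t) hf₁
    simp only [eval_mul, eval_add, eval_C, eval_pow, eval_X] at this
    linear_combination this
  have hd : d = -3 * c * s := by
    refine mul_left_cancel₀ (left_ne_zero_of_mul hac) ?_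
    linear_combination hg₁ 1 - hg₁ (-1) - (hs 1 - hs (-1)) / 2
  refine ⟨s, -(a * c) / g, g, by field_simp; simpa using hac, funext fun t => ?_, hg⟩
  refine mul_left_cancel₀ hg₀ ?_
  simp only [eval_mul, eval_sub, eval_C, eval_X]
  field_simp
  have := hs t
  rw [hd] at this
  linear_combination this / 2

end IsWeightedFamily

/-! ### Comparison with `SCL₂(0,s)` and rescaling -/

theorem eq_mul_of_forall_mul_eq {K : Type*} [Field K] {a b c d k u v : K} (hk : k ≠ 0)
    (h : ∀ t z, (a * t + b) * (c * z + d) = k * (t + u) * (z + v)) :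
    a * c = k ∧ b = a * u ∧ d = c * v := by
  have hac : a * c = k := by linear_combination h 1 1 - h 1 0 - h 0 1 + h 0 0
  refine ⟨hac, mul_left_cancel₀ (right_ne_zero_of_mul (hac ▸ hk)) ?_,
    mul_left_cancel₀ (left_ne_zero_of_mul (hac ▸ hk)) ?_⟩
  · linear_combination h 0 1 - h 0 0 - u * hac
  · linear_combination h 1 0 - h 0 0 - v * hac

theorem pSCL2_zero_one_ne_zero (s : ℂ) (n : ℤ) : pSCL2 0 s 1 n ≠ 0 := by
  intro h
  have h₀ (l) : evalEval 0 l (pSCL2 0 s 1 n) = 0 := by rw [h, evalEval_zero]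
  rcases eq_or_ne n 0 with rfl | hn
  · have hquad (l : ℂ) : (l + 2 * s) * (l + s) = 0 := by
      simpa [evalEval_pSCL2_zero] using h₀ l
    refine two_ne_zero (α := ℂ) ?_
    linear_combination hquad 1 + hquad (-1) - 2 * hquad 0
  rcases eq_or_ne (1 + n) 0 with hn' | hn'
  · simpa [evalEval_pSCL2_zero, hn, hn'] using h₀ 0
  · obtain ⟨l, hl⟩ := exists_evalEval_pSCL2_zero_ne_zero s one_ne_zero hn hn' 0
    exact hl (h₀ l)

/-- The brackets with `L₁` and `L₋₁` between the degrees `n` and `n + 1` are multiples of those of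
`SCL₂(0,s)`. The product `k` of the two factors does not depend on the chosen bases. -/
def IsRungMultiple (p : ℤ → ℤ → ℂ[X][X]) (s k : ℂ) (n : ℤ) : Prop :=
  ∃ a c, a * c = k ∧ p 1 n = a • pSCL2 0 s 1 n ∧ p (-1) (n + 1) = c • pSCL2 0 s (-1) (n + 1)

namespace IsRungMultiple

variable {p : ℤ → ℤ → ℂ[X][X]} {s k : ℂ} {n : ℤ}

theorem one_ne_zero (h : IsRungMultiple p s k n) (hk : k ≠ 0) : p 1 n ≠ 0 := by
  obtain ⟨a, c, rfl, h, -⟩ := h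
  rw [h]
  exact smul_ne_zero (left_ne_zero_of_mul hk) (pSCL2_zero_one_ne_zero s n)

theorem neg (h : IsRungMultiple (fun i j => p (-i) (-j)) s k n) :
    IsRungMultiple p s k (-(n + 1)) := by
  obtain ⟨a, c, hac, ha, hc⟩ := h
  refine ⟨-c, -a, by rw [neg_mul_neg, mul_comm, hac], ?_, ?_⟩
  · rw [neg_smul, ← smul_neg, ← pSCL2_zero_neg_neg, neg_neg]
    simpa only [neg_neg] using hc
  · rw [neg_add', sub_add_cancel, neg_smul, ← smul_neg, ← pSCL2_zero_neg_neg, neg_neg, neg_neg]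
    exact ha

end IsRungMultiple

namespace IsWeightedFamily

variable {p : ℤ → ℤ → ℂ[X][X]} {f : ℂ[X]} {α g s : ℂ} (hp : IsWeightedFamily p f)
  (hf : f = C α * (X - C s) * (X - C (2 * s))) (hg : ∀ x l, evalEval x l (p 1 (-1)) = g)
include hp hf hg

theorem isRungMultiple_zero : IsRungMultiple p s (-α * g) 0 := by
  refine ⟨-α, g, rfl, eq_of_forall_evalEval_eq fun x l => ?_,
    eq_of_forall_evalEval_eq fun x l => ?_⟩
  · rw [hp.evalEval_one_zero, evalEval_smul, evalEval_pSCL2_zero, hf]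
    simp only [eval_mul, eval_sub, eval_C, eval_X, map_mul, one_ne_zero, ↓reduceIte, add_zero,
      Int.cast_one, Int.cast_zero, smul_eq_mul]
    ring
  · rw [zero_add, hp.evalEval_neg_one_one, hg, evalEval_smul, evalEval_pSCL2_zero]
    simp

theorem evalEval_mul_evalEval_eq {n : ℤ} (hn : n + 1 ≠ 0) (h : IsRungMultiple p s (-α * g) n)
    (hw : HasWeight p (n + 1) (C (n + 1 : ℂ) * f)) (x l m : ℂ) :
    evalEval (x + m) l (p 1 (n + 1)) * evalEval x m (p (-1) (n + 1 + 1)) =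
      -α * g * (evalEval (x + m) l (pSCL2 0 s 1 (n + 1)) *
        evalEval x m (pSCL2 0 s (-1) (n + 1 + 1))) := by
  obtain ⟨a, c, hac, ha, hc⟩ := h
  have h₁ := hp.jacobi 1 (-1) (n + 1) x l m
  have h₂ := (isStructureFamily_pSCL2 0 s).jacobi 1 (-1) (n + 1) x l m
  have hone : evalEval (-l - m) l (pSCL2 0 s 1 (-1)) = 1 := by simp [evalEval_pSCL2_zero]
  have hzero : evalEval x (l + m) (pSCL2 0 s 0 (n + 1)) =
      -(n + 1) * ((l + m - s) * (l + m - 2 * s)) := by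
    rw [evalEval_pSCL2_zero, if_pos rfl, if_neg hn, if_neg (by rwa [zero_add])]
    push_cast
    ring
  rw [neg_add_cancel_comm_assoc, add_neg_cancel, add_comm 1] at h₁ h₂
  rw [hone, hzero] at h₂
  rw [ha, hc, hg, hw.evalEval_eq, hf, evalEval_smul, evalEval_smul] at h₁
  simp only [eval_mul, eval_sub, eval_C, eval_X, smul_eq_mul] at h₁
  -- In the Jacobi identity for `(L₁, L₋₁, L_{n+1})`, the factor `-α * g` is known for two terms.
  linear_combination -h₁ + -α * g * h₂ + hac *
    (evalEval (x + l) m (pSCL2 0 s (-1) (n + 1)) * evalEval x l (pSCL2 0 s 1 n))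

theorem isRungMultiple_succ (hα : α * g ≠ 0) {n : ℕ} (hn : IsRungMultiple p s (-α * g) n)
    (hw : HasWeight p (n + 1) (C (n + 1 : ℂ) * f)) : IsRungMultiple p s (-α * g) (n + 1) := by
  obtain ⟨A, B, hA⟩ := hp.exists_affine (i := 1) (j := n + 1) (by omega) (by omega) (by omega)
  obtain ⟨A', B', hA'⟩ :=
    hp.exists_affine (i := -1) (j := n + 1 + 1) (by omega) (by omega) (by omega)
  have hM (x l) : evalEval x l (pSCL2 0 s 1 (n + 1)) = x + (n + 2) * l + -s * n := by
    rw [evalEval_pSCL2_zero, if_neg one_ne_zero, if_neg (by omega), if_neg (by omega)]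
    push_cast
    ring
  have hM' (x l) : evalEval x l (pSCL2 0 s (-1) (n + 1 + 1)) =
      -x + (n + 1) * l + -s * (n + 3) := by
    rw [evalEval_pSCL2_zero, if_neg (by norm_num), if_neg (by omega), if_neg (by omega)]
    push_cast
    ring
  have hn' : (n + 2 : ℂ) ≠ 0 := by exact_mod_cast (n + 1).succ_ne_zero
  obtain ⟨hAA', hB, hB'⟩ := eq_mul_of_forall_mul_eq (k := -α * g) (a := A) (b := B) (c := A')
    (d := B') (u := -s * n) (v := -s * (n + 3)) (by rwa [neg_mul, neg_ne_zero]) fun t z => by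
      obtain ⟨l, hl⟩ : ∃ l, (n + 2) * l = t + z := ⟨_, mul_div_cancel₀ _ hn'⟩
      have := hp.evalEval_mul_evalEval_eq hf hg (by omega) hn (by exact_mod_cast hw) (-z) l 0
      rw [hA, hA', hM, hM'] at this
      push_cast at this
      linear_combination this - (A * (A' * z + B') + α * g * (z + -s * (n + 3))) * hl
  refine ⟨A, A', hAA', eq_of_forall_evalEval_eq fun x l => ?_,
    eq_of_forall_evalEval_eq fun x l => ?_⟩
  · rw [evalEval_smul, hA, hM, hB, smul_eq_mul]
    push_cast
    ring
  · rw [evalEval_smul, hA', hM', hB', smul_eq_mul]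
    push_cast
    ring

theorem isRungMultiple_natCast (hα : α * g ≠ 0) (n : ℕ) : IsRungMultiple p s (-α * g) n := by
  suffices HasWeight p (n + 1) (C (n + 1 : ℂ) * f) ∧ IsRungMultiple p s (-α * g) n from this.2
  have hα' : -α * g ≠ 0 := by rwa [neg_mul, neg_ne_zero]
  induction n with
  | zero =>
    exact ⟨by simpa using hp.weight_one, hp.isRungMultiple_zero hf hg⟩
  | succ n ih =>
    have hrung := hp.isRungMultiple_succ hf hg hα ih.2 ih.1
    refine ⟨?_, by exact_mod_cast hrung⟩
    convert hp.weight_one.add hp.toIsStructureFamily ih.1 (hrung.one_ne_zero hα') using 1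
    · rw [Nat.cast_succ, add_comm]
    · rw [Nat.cast_succ, C_add, C_add, C_1]
      ring

theorem isRungMultiple (hα : α * g ≠ 0) (n : ℤ) : IsRungMultiple p s (-α * g) n := by
  obtain n | n := n
  · exact hp.isRungMultiple_natCast hf hg hα n
  · have := hp.neg.isRungMultiple_natCast (α := -α) (g := -g) (s := s)
      (by rw [hf, C_neg]; ring) (fun x l => by rw [neg_neg, hp.evalEval_neg_one_one, hg])
      (by rwa [neg_mul_neg]) n
    rw [← neg_mul_neg, neg_neg, Int.negSucc_eq]
    simpa only [neg_neg] using this.neg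

end IsWeightedFamily

theorem exists_forall_add_one_eq_mul {G : Type*} [Group G] (a : ℤ → G) :
    ∃ r : ℤ → G, r 1 = 1 ∧ ∀ n, r (n + 1) = r n * a n := by
  let r (n : ℤ) : G := Int.inductionOn' (motive := fun _ => G) n 1 1 (fun k _ x => x * a k)
    fun k _ x => x * (a (k - 1))⁻¹
  refine ⟨r, Int.inductionOn'_self, fun n => ?_⟩
  obtain hn | hn := le_or_gt 1 n
  · exact Int.inductionOn'_add_one hn
  · have : r n = r (n + 1) * (a n)⁻¹ := by
      simpa only [add_sub_cancel_right] using
        Int.inductionOn'_sub_one (motive := fun _ => G) (zero := 1)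
          (succ := fun k _ x => x * a k) (pred := fun k _ x => x * (a (k - 1))⁻¹)
          (Int.add_one_le_iff.2 hn)
    rw [this, inv_mul_cancel_right]

namespace IsStructureFamily

variable {p : ℤ → ℤ → ℂ[X][X]}

theorem units_smul (hp : IsStructureFamily p) (r : ℤ → ℂˣ) :
    IsStructureFamily fun i j => (r i * r j / r (i + j)) • p i j := by
  refine hp.of_forall_mul_eq (ω := fun i => C ↑(r i)) (fun i => C_ne_zero.2 (r i).ne_zero)
    fun i j x l => ?_
  simp only [Units.smul_def, evalEval_smul, eval_C, smul_eq_mul, Units.val_div_eq_div_val,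
    Units.val_mul]
  rw [← mul_assoc, mul_div_cancel₀ _ (r (i + j)).ne_zero]

theorem exists_units_smul_eq_pSCL2_zero {s k : ℂ} (hp : IsStructureFamily p) (hk : k ≠ 0)
    (h : ∀ n, IsRungMultiple p s k n) :
    ∃ r : ℤ → ℂˣ, ∀ i j, (r i * r j / r (i + j)) • p i j = pSCL2 0 s i j := by
  choose a c hac ha hc using h
  lift a to ℤ → ℂˣ using fun n => (left_ne_zero_of_mul ((hac n).trans_ne hk)).isUnit
  lift c to ℤ → ℂˣ using fun n => (right_ne_zero_of_mul ((hac n).trans_ne hk)).isUnit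
  have hac₀ (n) : a n * c n = a 0 * c 0 := Units.ext ((hac n).trans (hac 0).symm)
  -- Skew-symmetry, as both numbers compare `[L₁ λ L₋₁]` with the same bracket of `SCL₂(0,s)`.
  have hc₀ : c 0 = a (-1) := Units.ext <| by
    have := hp.skew 1 (-1) 0 0
    have hc₀ := hc 0
    rw [zero_add] at hc₀
    rw [ha, hc₀, evalEval_smul, evalEval_smul, evalEval_pSCL2_zero,
      evalEval_pSCL2_zero] at this
    simpa using this.symm
  obtain ⟨r, hr₁, hr⟩ := exists_forall_add_one_eq_mul a
  have hr₀ : 1 = r (-1) * (a (-1) * a 0) := by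
    have h₀ := hr (-1)
    have h₁ := hr 0
    rw [neg_add_cancel] at h₀
    rw [zero_add, hr₁, h₀, mul_assoc] at h₁
    exact h₁
  refine ⟨r, fun i j => congrFun₂ ((hp.units_smul r).eq_pSCL2_zero ?_ ?_) i j⟩
  · ext1 n
    rw [ha, ← Units.smul_def, smul_smul, add_comm, hr, hr₁, one_mul, div_mul_eq_mul_div,
      div_self', one_smul]
  · ext1 n
    obtain ⟨n, rfl⟩ : ∃ m, n = m + 1 := ⟨n - 1, by ring⟩
    rw [hc, ← Units.smul_def, smul_smul, neg_add_cancel_comm_assoc, hr, mul_left_comm,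
      mul_div_cancel_left, mul_assoc, hac₀, hc₀, mul_comm (a 0), ← hr₀, one_smul]

end IsStructureFamily

namespace LieConformalAlgebra

variable {L : Type} [AddCommGroup L] [Module ℂ L] {A : LieConformalAlgebra L}

theorem BracketEq.units_smul {a b t : L} {p : ℂ[X][X]} (h : A.BracketEq a b t p) (u v w : ℂˣ) :
    A.BracketEq (u • a) (v • b) (w • t) ((u * v / w) • p) := fun n => by
  simp only [Units.smul_def, map_smul, LinearMap.smul_apply, h n, applyP_eq_aeval, coeff_smul,
    smul_smul]
  congr 1
  rw [Units.val_div_eq_div_val, Units.val_mul]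
  field_simp

theorem IsFreePolyBasis.units_smul {ι : Type} {v : ι → L} (h : A.IsFreePolyBasis v)
    (r : ι → ℂˣ) : A.IsFreePolyBasis fun i => r i • v i := by
  let B := (Module.Basis.mk h.1 h.2.ge).unitsSMul fun q => r q.1
  have hB : ⇑B = fun q : ι × ℕ => (⇑A.D)^[q.2] (r q.1 • v q.1) := by
    ext q
    simp only [B, Module.Basis.unitsSMul_apply, Module.Basis.mk_apply, Units.smul_def,
      ← Module.End.pow_apply, map_smul]
  rw [IsFreePolyBasis, ← hB]
  exact ⟨B.linearIndependent, B.span_eq⟩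

end LieConformalAlgebra

theorem RankOneContext.isSCL2_zero_of_forall_isRungMultiple {L : Type} [AddCommGroup L]
    [Module ℂ L] (A : RankOneContext L) {s k : ℂ} (hk : k ≠ 0)
    (h : ∀ n, IsRungMultiple A.sp s k n) : A.IsSCL2 0 s := by
  have hG (n : ℤ) : A.G n ≠ ⊥ := fun hn => (h n).one_ne_zero hk (A.sp_zero 1 n (.inr (.inl hn)))
  obtain ⟨r, hr⟩ := A.isStructureFamily.exists_units_smul_eq_pSCL2_zero hk h
  refine ⟨fun i => r i • A.bas i, (A.isFreePolyBasis_bas hG).units_smul r, fun i j => ?_⟩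
  rw [← hr]
  exact (A.bracketEq_bas i j).units_smul (r i) (r j) (r (i + j))

/-- a class `𝒱` algebra with `deg p_{0,1}(λ) = 2` is isomorphic
to `SCL₂(0,s)` for some `s ∈ ℂ`. -/
theorem classV_deg_two_SCL2
    {L : Type} [AddCommGroup L] [Module ℂ L] (C : ClassV L)
    (hmem₀ : ∀ n : ℕ, ((C.sp 0 1).coeff n).natDegree = 0)
    (hdeg₀ : (C.sp 0 1).natDegree = 2) :
    ∃ s : ℂ, C.toLieConformalAlgebra.IsSCL2 0 s := by
  obtain ⟨f, hf⟩ := exists_map_C_eq hmem₀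
  have hfdeg : f.natDegree = 2 := by
    rw [← natDegree_map_eq_of_injective C_injective f, hf, hdeg₀]
  have hp : IsWeightedFamily C.sp f := ClassV.isWeightedFamily hf.symm
  obtain ⟨s, α, g, hαg, hfs, hg⟩ := hp.exists_weight_eq hfdeg C.ne_m11
  have hk : -α * g ≠ 0 := by rwa [neg_mul, neg_ne_zero]
  exact ⟨s, C.isSCL2_zero_of_forall_isRungMultiple hk (hp.isRungMultiple hfs hg hαg)⟩
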